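/- arXiv:1712.07309 — 8 statements merged into one kernel-verified Lean document; each statement's English description precedes it below -/
import Mathlib

section
/- Fix an integer n ≥ 1 and set a = (−1 + (n−1)√(n+1))/n and b = (−1 − √(n+1))/n. Define n+1 points in ℝⁿ: the point v₀ = (1,1,…,1), and for each j = 1,…,n the point v_j whose j-th coordinate is a and whose other coordinates all equal b. Then the cubature rule with these n+1 nodes, each with weight 1/(n+1), is exact of degree 2 for the Gaussian integral: Σ_{j=0}^{n} (1/(n+1)) p(v_j) = ∫_{ℝⁿ} (2π)^{−n/2} e^{−‖x‖²/2} p(x) dx for every real polynomial p in n variables of total degree at most 2. -/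
/-!
By linearity it suffices to treat a monomial `x ^ d` with `|d| ≤ 2`, that is `1`, `x k` or
`x k * x l`. The Gaussian density is a product of one-dimensional standard normal densities, so
Fubini (`gaussian_integral_prod_pow`) reduces the integral of a monomial to the one-dimensional
moments `1, 0, 1` of order `0, 1, 2`; hence the moments are `1`, `0` and `δ k l`. On the nodes,
write `s = √(n + 1)`. The matching moments are the identities
`1 + a + (n - 1) b = 0`, `1 + a² + (n - 1) b² = n + 1` and `1 + 2 a b + (n - 2) b² = 0`,
which follow from `s² = n + 1`.
-/

open MeasureTheory

open ProbabilityTheory in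
lemma gaussianPDF_moment_zero : ∫ x : ℝ, gaussianPDFReal 0 1 x * x ^ 0 = 1 := by
  simpa using integral_gaussianPDFReal_eq_one 0 (v := 1) one_ne_zero

open ProbabilityTheory in
lemma gaussianPDF_moment_one : ∫ x : ℝ, gaussianPDFReal 0 1 x * x ^ 1 = 0 := by
  have h := integral_gaussianReal_eq_integral_smul (μ := 0) (v := 1) (f := fun x : ℝ => x)
    one_ne_zero
  rw [integral_id_gaussianReal] at h
  simpa using h.symm

open ProbabilityTheory in
lemma gaussianPDF_moment_two : ∫ x : ℝ, gaussianPDFReal 0 1 x * x ^ 2 = 1 := by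
  have h := integral_gaussianReal_eq_integral_smul (μ := 0) (v := 1) (f := fun x : ℝ => x ^ 2)
    one_ne_zero
  have hv := variance_fun_id_gaussianReal (μ := 0) (v := 1)
  rw [variance_eq_integral (by fun_prop), integral_id_gaussianReal] at hv
  simp only [sub_zero] at hv
  rw [hv] at h
  simpa using h.symm

open ProbabilityTheory in
lemma gaussianPDF_mul_pow_integrable (k : ℕ) :
    Integrable (fun x : ℝ => gaussianPDFReal 0 1 x * x ^ k) := by
  have h := (integrable_rpow_mul_exp_neg_mul_sq (b := 1 / 2) (by norm_num) (s := k)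
    (by have : (0 : ℝ) ≤ k := by positivity
        linarith)).const_mul (√(2 * Real.pi))⁻¹
  refine h.congr (Filter.Eventually.of_forall fun x => ?_)
  simp only [gaussianPDFReal, Real.rpow_natCast, sub_zero, NNReal.coe_one, mul_one]
  rw [show -x ^ 2 / 2 = -(1 / 2) * x ^ 2 by ring]
  ring

open ProbabilityTheory in
/-- The `n`-dimensional Gaussian density times a monomial splits as a product over the
coordinates. -/
lemma gaussian_density_mul_prod (n : ℕ) (d : Fin n → ℕ) (y : Fin n → ℝ) :
    (2 * Real.pi) ^ (-(n : ℝ) / 2) * Real.exp (-(∑ t, y t ^ 2) / 2) * ∏ t, y t ^ d t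
      = ∏ t, gaussianPDFReal 0 1 (y t) * y t ^ d t := by
  rw [Finset.prod_mul_distrib]
  congr 1
  simp only [gaussianPDFReal, sub_zero, NNReal.coe_one, mul_one]
  rw [Finset.prod_mul_distrib, ← Real.exp_sum, Finset.prod_const, Finset.card_univ,
    Fintype.card_fin]
  congr 1
  · rw [Real.sqrt_eq_rpow, ← Real.rpow_neg (by positivity), ← Real.rpow_natCast,
      ← Real.rpow_mul (by positivity)]
    congr 1
    ring
  · rw [← Finset.sum_div, Finset.sum_neg_distrib]

open ProbabilityTheory in
lemma gaussian_integral_prod_pow (n : ℕ) (d : Fin n → ℕ) :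
    ∫ y : Fin n → ℝ,
      (2 * Real.pi) ^ (-(n : ℝ) / 2) * Real.exp (-(∑ t, y t ^ 2) / 2) * ∏ t, y t ^ d t
      = ∏ t, ∫ x : ℝ, gaussianPDFReal 0 1 x * x ^ d t := by
  simp_rw [gaussian_density_mul_prod]
  exact integral_fintype_prod_volume_eq_prod
    (fun t (x : ℝ) => gaussianPDFReal 0 1 x * x ^ d t)

open ProbabilityTheory in
lemma gaussian_prod_pow_integrable (n : ℕ) (d : Fin n → ℕ) :
    Integrable (fun y : Fin n → ℝ =>
      (2 * Real.pi) ^ (-(n : ℝ) / 2) * Real.exp (-(∑ t, y t ^ 2) / 2) * ∏ t, y t ^ d t) := by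
  simp_rw [gaussian_density_mul_prod]
  exact Integrable.fintype_prod (f := fun t (x : ℝ) => gaussianPDFReal 0 1 x * x ^ d t)
    fun t => gaussianPDF_mul_pow_integrable (d t)

lemma finsupp_eq_single_add {n m : ℕ} (d : Fin n →₀ ℕ) (hd : d.degree ≤ m + 1) :
    d = 0 ∨ ∃ k e, d = Finsupp.single k 1 + e ∧ e.degree ≤ m := by
  by_cases h : d = 0
  · exact Or.inl h
  obtain ⟨k, hk⟩ := Finsupp.ne_iff.mp h
  have hle : Finsupp.single k 1 ≤ d := by
    rw [Finsupp.single_le_iff]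
    exact Nat.one_le_iff_ne_zero.mpr hk
  refine Or.inr ⟨k, d - Finsupp.single k 1, (add_tsub_cancel_of_le hle).symm, ?_⟩
  have h2 := congrArg Finsupp.degree (add_tsub_cancel_of_le hle)
  rw [map_add, Finsupp.degree_single] at h2
  omega

/-- Exponents of degree at most `2` are those of `1`, `x k` and `x k * x l`. -/
lemma finsupp_degree_le_two {n : ℕ} (d : Fin n →₀ ℕ) (hd : d.degree ≤ 2) :
    d = 0 ∨ (∃ k, d = Finsupp.single k 1) ∨
      ∃ k l, d = Finsupp.single k 1 + Finsupp.single l 1 := by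
  rcases finsupp_eq_single_add d hd with h | ⟨k, e, rfl, he⟩
  · exact Or.inl h
  rcases finsupp_eq_single_add e he with rfl | ⟨l, f, rfl, hf⟩
  · exact Or.inr (Or.inl ⟨k, by simp⟩)
  · have : f = 0 := (Finsupp.degree_eq_zero_iff f).mp (by omega)
    exact Or.inr (Or.inr ⟨k, l, by simp [this]⟩)

lemma sum_ite_eq_const {n : ℕ} (k : Fin n) (a b : ℝ) :
    ∑ j : Fin n, (if k = j then a else b) = a + ((n : ℝ) - 1) * b := by
  have h : ∀ j : Fin n, (if k = j then a else b) = (if k = j then a - b else 0) + b := by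
    intro j; split_ifs <;> ring
  simp_rw [h, Finset.sum_add_distrib]
  simp
  ring

lemma sum_ite_mul_ite {n : ℕ} (k l : Fin n) (hkl : k ≠ l) (a b : ℝ) :
    ∑ j : Fin n, (if k = j then a else b) * (if l = j then a else b)
      = 2 * a * b + ((n : ℝ) - 2) * b ^ 2 := by
  have h : ∀ j : Fin n, (if k = j then a else b) * (if l = j then a else b)
      = (if k = j then (a - b) * b else 0) + (if l = j then (a - b) * b else 0) + b ^ 2 := by
    intro j
    split_ifs with h1 h2
    · exact absurd (h1.trans h2.symm) hkl
    all_goals ring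
  simp_rw [h, Finset.sum_add_distrib]
  simp
  ring

/-- Exactness of the simplex rule on a single monomial of degree at most `2`. -/
lemma simplex_rule_monomial (n : ℕ) (hn : 1 ≤ n) (a b : ℝ)
    (ha : a = (-1 + ((n : ℝ) - 1) * Real.sqrt ((n : ℝ) + 1)) / n)
    (hb : b = (-1 - Real.sqrt ((n : ℝ) + 1)) / n) (d : Fin n →₀ ℕ) (hd : d.degree ≤ 2) :
    ∑ j : Fin (n + 1), (1 / ((n : ℝ) + 1)) *
        ∏ k : Fin n,
          (if (j : ℕ) = 0 then (1 : ℝ) else if (k : ℕ) + 1 = (j : ℕ) then a else b) ^ d k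
      = ∫ y : Fin n → ℝ,
          (2 * Real.pi) ^ (-(n : ℝ) / 2) * Real.exp (-(∑ t, y t ^ 2) / 2)
            * ∏ k, y k ^ d k := by
  have hn0 : (n : ℝ) ≠ 0 := by exact_mod_cast (by omega : n ≠ 0)
  have hn1 : (n : ℝ) + 1 ≠ 0 := by positivity
  have hs : Real.sqrt ((n : ℝ) + 1) ^ 2 = n + 1 := Real.sq_sqrt (by positivity)
  generalize Real.sqrt ((n : ℝ) + 1) = s at ha hb hs
  rw [gaussian_integral_prod_pow, ← Finset.mul_sum, Fin.sum_univ_succ]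
  simp only [Fin.val_zero, Fin.val_succ, if_true, Nat.add_eq_zero_iff, one_ne_zero, and_false,
    if_false, add_left_inj, Fin.val_inj]
  have hprod : ∀ (x : Fin n → ℝ) (k : Fin n), ∏ i, x i ^ (Finsupp.single k 1) i = x k := by
    intro x k
    rw [Finset.prod_eq_single k]
    · simp
    · intro i _ hi
      simp [Finsupp.single_eq_of_ne hi]
    · simp
  rcases finsupp_degree_le_two d hd with rfl | ⟨k, rfl⟩ | ⟨k, l, rfl⟩
  · simp only [Finsupp.coe_zero, Pi.zero_apply, gaussianPDF_moment_zero]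
    simp
    field_simp
    ring
  · have hint : ∏ t : Fin n, (∫ x : ℝ, ProbabilityTheory.gaussianPDFReal 0 1 x *
        x ^ (Finsupp.single k 1) t) = 0 := by
      refine Finset.prod_eq_zero (Finset.mem_univ k) ?_
      rw [Finsupp.single_eq_same]
      exact gaussianPDF_moment_one
    rw [hint]
    simp_rw [hprod]
    rw [sum_ite_eq_const, ha, hb]
    field_simp
    ring
  · simp only [Finsupp.coe_add, Pi.add_apply, pow_add, Finset.prod_mul_distrib]
    simp_rw [hprod]
    by_cases hkl : k = l
    · subst hkl
      have hint : ∏ t : Fin n, (∫ x : ℝ, ProbabilityTheory.gaussianPDFReal 0 1 x *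
          (x ^ (Finsupp.single k 1) t * x ^ (Finsupp.single k 1) t)) = 1 := by
        refine Finset.prod_eq_one fun t _ => ?_
        simp_rw [← pow_add]
        by_cases ht : t = k
        · subst ht
          rw [Finsupp.single_eq_same]
          exact gaussianPDF_moment_two
        · rw [Finsupp.single_eq_of_ne ht]
          exact gaussianPDF_moment_zero
      rw [hint]
      have h : ∀ j : Fin n, (if k = j then a else b) * (if k = j then a else b)
          = if k = j then a * a else b * b := by
        intro j; split_ifs <;> rfl
      simp_rw [h]
      rw [sum_ite_eq_const, ha, hb]
      field_simp
      linear_combination ((n : ℝ) - 1) * n * hs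
    · rw [sum_ite_mul_ite k l hkl, Finset.prod_eq_zero (Finset.mem_univ k), ha, hb]
      · field_simp
        linear_combination (-(n : ℝ)) * hs
      · simp_rw [← pow_add]
        rw [Finsupp.single_eq_same, Finsupp.single_eq_of_ne hkl]
        exact gaussianPDF_moment_one

/-- The classical `n+1` point simplex rule, in the simple form of Fan and You generalized
to `n` dimensions, is exact of degree 2 for the Gaussian integral `G_n`. -/
theorem stmt_1 (n : ℕ) (hn : 1 ≤ n) (a b : ℝ)
    (ha : a = (-1 + ((n : ℝ) - 1) * Real.sqrt ((n : ℝ) + 1)) / n)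
    (hb : b = (-1 - Real.sqrt ((n : ℝ) + 1)) / n) :
    ∀ p : MvPolynomial (Fin n) ℝ, p.totalDegree ≤ 2 →
      ∑ j : Fin (n + 1), (1 / ((n : ℝ) + 1)) *
          MvPolynomial.eval
            (fun k : Fin n =>
              if (j : ℕ) = 0 then (1 : ℝ) else if (k : ℕ) + 1 = (j : ℕ) then a else b) p
        = ∫ y : Fin n → ℝ,
            (2 * Real.pi) ^ (-(n : ℝ) / 2) * Real.exp (-(∑ t, y t ^ 2) / 2)
              * MvPolynomial.eval y p := by
  intro p hp
  simp_rw [MvPolynomial.eval_eq', Finset.mul_sum, mul_left_comm _ (MvPolynomial.coeff _ p)]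
  rw [Finset.sum_comm, integral_finsetSum p.support
    fun d _ => (gaussian_prod_pow_integrable n d).const_mul (MvPolynomial.coeff d p)]
  refine Finset.sum_congr rfl fun d hd => ?_
  rw [integral_const_mul, ← Finset.mul_sum,
    simplex_rule_monomial n hn a b ha hb d ((MvPolynomial.le_totalDegree hd).trans hp)]
end

section
/- Let n ≥ 1 and let α₁,…,α_n be nonnegative integers. If every α_i is even, then ∫_{B} x₁^{α₁} ⋯ x_n^{α_n} dx = Γ(β₁)Γ(β₂)⋯Γ(β_n) / Γ(β₁ + ⋯ + β_n + 1), where B = {x ∈ ℝⁿ : ‖x‖ ≤ 1} is the closed unit ball, β_i = (α_i + 1)/2, and Γ is the Gamma function. If some α_i is odd, the integral equals 0. -/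
open MeasureTheory

/-!
Write `q x = ∑ x_t ^ 2`, let `f` be the monomial and `I` its integral over `q ≤ 1`. Inserting
`exp (-q x) = ∫ s in Ioi 0, 1[q x ≤ s] exp (-s)` into the Gaussian integral `∫ f x exp (-q x)` and
exchanging the integrals gives `∫ s in Ioi 0, exp (-s) ∫_{q ≤ s} f`. By homogeneity the inner
integral is `s ^ (∑ β_t) * I`, so that `∫ f x exp (-q x) = Γ(∑ β_t + 1) * I`
(`monomialBall_mul_Gamma`). The Gaussian integral also factors into the one-dimensional moments
`∫ x ^ a * exp (-x ^ 2)`, which equal `Γ((a + 1) / 2)` for even `a` and vanish for odd `a`.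
-/

lemma gaussMoment_integrable (a : ℕ) :
    Integrable (fun x : ℝ => x ^ a * Real.exp (-x ^ 2)) := by
  have h := integrable_rpow_mul_exp_neg_mul_sq (b := 1) one_pos (s := a)
    (by have : (0 : ℝ) ≤ a := a.cast_nonneg
        linarith)
  simpa [Real.rpow_natCast] using h

lemma gaussMoment_even {a : ℕ} (ha : Even a) :
    ∫ x : ℝ, x ^ a * Real.exp (-x ^ 2) = Real.Gamma (((a : ℝ) + 1) / 2) := by
  have h1 : ∀ x : ℝ, x ^ a * Real.exp (-x ^ 2) = |x| ^ a * Real.exp (-|x| ^ 2) := by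
    intro x
    rw [ha.pow_abs, sq_abs]
  rw [integral_congr_ae (Filter.Eventually.of_forall h1)]
  rw [integral_comp_abs (f := fun x : ℝ => x ^ a * Real.exp (-x ^ 2))]
  have h2 := integral_rpow_mul_exp_neg_rpow (p := 2) (q := a) two_pos
    (by have : (0 : ℝ) ≤ a := a.cast_nonneg
        linarith)
  simp only [Real.rpow_natCast, Real.rpow_two] at h2
  rw [h2]
  ring

lemma gaussMoment_odd {a : ℕ} (ha : Odd a) :
    ∫ x : ℝ, x ^ a * Real.exp (-x ^ 2) = 0 := by
  have h := integral_neg_eq_self (fun x : ℝ => x ^ a * Real.exp (-x ^ 2)) volume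
  simp only [ha.neg_pow, neg_sq, neg_mul, integral_neg] at h
  linarith

open scoped Pointwise in
lemma setIntegral_monomial_scale {n : ℕ} (α : Fin n → ℕ) {s : ℝ} (hs : 0 < s) :
    ∫ x in {y : Fin n → ℝ | ∑ t, y t ^ 2 ≤ s}, ∏ t, x t ^ α t
      = s ^ (∑ t, ((α t : ℝ) + 1) / 2)
        * ∫ x in {y : Fin n → ℝ | ∑ t, y t ^ 2 ≤ 1}, ∏ t, x t ^ α t := by
  have hr : 0 < √s := Real.sqrt_pos.2 hs
  have h := Measure.setIntegral_comp_smul_of_pos (volume : Measure (Fin n → ℝ))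
    (fun x => ∏ t, x t ^ α t) {y : Fin n → ℝ | ∑ t, y t ^ 2 ≤ 1} hr
  have hset : √s • {y : Fin n → ℝ | ∑ t, y t ^ 2 ≤ 1} = {y : Fin n → ℝ | ∑ t, y t ^ 2 ≤ s} := by
    ext y
    rw [Set.mem_smul_set_iff_inv_smul_mem₀ hr.ne']
    simp only [Set.mem_setOf_eq, Pi.smul_apply, smul_eq_mul, mul_pow, inv_pow, Real.sq_sqrt hs.le,
      ← Finset.mul_sum]
    rw [inv_mul_le_iff₀ hs, mul_one]
  rw [hset] at h
  simp only [Pi.smul_apply, smul_eq_mul, mul_pow, Finset.prod_mul_distrib,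
    integral_const_mul, Finset.prod_pow_eq_pow_sum, Module.finrank_fin_fun] at h
  have hp : s ^ (∑ t, ((α t : ℝ) + 1) / 2) = √s ^ n * √s ^ (∑ t, α t) := by
    rw [Real.sqrt_eq_rpow, ← pow_add, ← Real.rpow_mul_natCast hs.le]
    congr 1
    rw [← Finset.sum_div, Finset.sum_add_distrib]
    push_cast
    simp
    ring
  rw [hp, mul_assoc, h, mul_inv_cancel_left₀ (pow_pos hr n).ne']

lemma integral_exp_indicator {c : ℝ} (hc : 0 ≤ c) :
    ∫ s in Set.Ioi (0 : ℝ), (Set.Ici c).indicator (fun s => Real.exp (-s)) s = Real.exp (-c) := by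
  rw [← integral_Ici_eq_integral_Ioi, setIntegral_indicator measurableSet_Ici,
    Set.inter_eq_right.2 (Set.Ici_subset_Ici.2 hc), integral_Ici_eq_integral_Ioi,
    integral_exp_neg_Ioi]

lemma prod_mul_exp {n : ℕ} (α : Fin n → ℕ) (x : Fin n → ℝ) :
    (∏ t, x t ^ α t) * Real.exp (-∑ t, x t ^ 2) = ∏ t, (x t ^ α t * Real.exp (-x t ^ 2)) := by
  rw [Finset.prod_mul_distrib, ← Real.exp_sum, Finset.sum_neg_distrib]

/-- The kernel `(x, s) ↦ f x * 1[q x ≤ s] * exp (-s)` is absolutely integrable, which justifies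
the exchange of the two integrals. -/
lemma kernel_integrable {n : ℕ} (α : Fin n → ℕ) :
    Integrable (Function.uncurry fun (x : Fin n → ℝ) (s : ℝ) => (∏ t, x t ^ α t) *
      (Set.Ici (∑ t, x t ^ 2)).indicator (fun s => Real.exp (-s)) s)
      ((volume : Measure (Fin n → ℝ)).prod (volume.restrict (Set.Ioi (0 : ℝ)))) := by
  have hmeas : Measurable (Function.uncurry fun (x : Fin n → ℝ) (s : ℝ) => (∏ t, x t ^ α t) *
      (Set.Ici (∑ t, x t ^ 2)).indicator (fun s => Real.exp (-s)) s) := by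
    have hS : MeasurableSet {p : (Fin n → ℝ) × ℝ | ∑ t, p.1 t ^ 2 ≤ p.2} :=
      measurableSet_le (by fun_prop) (by fun_prop)
    have he : Measurable fun p : (Fin n → ℝ) × ℝ => Real.exp (-p.2) := by fun_prop
    have hf : Measurable fun p : (Fin n → ℝ) × ℝ => ∏ t, p.1 t ^ α t := by fun_prop
    exact hf.mul (he.indicator hS)
  rw [integrable_prod_iff hmeas.aestronglyMeasurable]
  constructor
  · refine Filter.Eventually.of_forall fun x => ?_
    simp only [Function.uncurry_apply_pair]
    exact (IntegrableOn.indicator (integrableOn_exp_neg_Ioi 0) measurableSet_Ici).const_mul _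
  · have h : ∀ x : Fin n → ℝ, ∫ s in Set.Ioi (0 : ℝ), ‖(∏ t, x t ^ α t) *
        (Set.Ici (∑ t, x t ^ 2)).indicator (fun s => Real.exp (-s)) s‖
        = ‖∏ t, (x t ^ α t * Real.exp (-x t ^ 2))‖ := by
      intro x
      have hnn : ∀ s, 0 ≤ (Set.Ici (∑ t, x t ^ 2)).indicator (fun s => Real.exp (-s)) s :=
        fun s => Set.indicator_nonneg (fun _ _ => (Real.exp_pos _).le) s
      simp_rw [norm_mul, Real.norm_of_nonneg (hnn _)]
      rw [integral_const_mul, integral_exp_indicator (by positivity), ← prod_mul_exp, norm_mul,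
        Real.norm_of_nonneg (Real.exp_pos _).le]
    simp only [Function.uncurry_apply_pair, h]
    exact (Integrable.fintype_prod
      (f := fun (t : Fin n) (y : ℝ) => y ^ α t * Real.exp (-y ^ 2))
      fun t => gaussMoment_integrable (α t)).norm

/-- The Gaussian integral of a monomial, computed on one side by integrating over the sublevel
sets of `∑ x_t ^ 2` and on the other by Fubini in the coordinates. -/
lemma monomialBall_mul_Gamma {n : ℕ} (α : Fin n → ℕ) :
    Real.Gamma ((∑ t, ((α t : ℝ) + 1) / 2) + 1)
        * (∫ x in {y : Fin n → ℝ | ∑ t, y t ^ 2 ≤ 1}, ∏ t, x t ^ α t)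
      = ∏ t, ∫ x : ℝ, x ^ α t * Real.exp (-x ^ 2) := by
  have hswap := integral_integral_swap (kernel_integrable α)
  have hL : ∀ x : Fin n → ℝ, ∫ s in Set.Ioi (0 : ℝ), (∏ t, x t ^ α t) *
        (Set.Ici (∑ t, x t ^ 2)).indicator (fun s => Real.exp (-s)) s
        = ∏ t, (x t ^ α t * Real.exp (-x t ^ 2)) := by
    intro x
    rw [integral_const_mul, integral_exp_indicator (by positivity), prod_mul_exp]
  simp_rw [hL] at hswap
  rw [integral_fintype_prod_volume_eq_prod
    (fun (t : Fin n) (y : ℝ) => y ^ α t * Real.exp (-y ^ 2))] at hswap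
  rw [hswap, Real.Gamma_eq_integral (by positivity), ← integral_mul_const]
  refine setIntegral_congr_fun measurableSet_Ioi fun s hs => ?_
  have hS : MeasurableSet {y : Fin n → ℝ | ∑ t, y t ^ 2 ≤ s} :=
    measurableSet_le (by fun_prop) (by fun_prop)
  have hR : ∀ x : Fin n → ℝ, (∏ t, x t ^ α t) *
      (Set.Ici (∑ t, x t ^ 2)).indicator (fun s => Real.exp (-s)) s
      = Real.exp (-s) *
        {y : Fin n → ℝ | ∑ t, y t ^ 2 ≤ s}.indicator (fun x => ∏ t, x t ^ α t) x := by
    intro x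
    by_cases h : ∑ t, x t ^ 2 ≤ s
    · simp [Set.indicator, h, mul_comm]
    · simp [Set.indicator, h]
  simp only [hR, integral_const_mul, integral_indicator hS, setIntegral_monomial_scale α hs]
  rw [add_sub_cancel_right, mul_assoc]

/-- Monomial integrals over the closed unit ball `S_n`: if all exponents are even the
integral is `∏ Γ(β_i) / Γ(β₁+⋯+β_n+1)` with `β_i = (α_i+1)/2`; if some exponent is odd
the integral vanishes. -/
theorem stmt_3 (n : ℕ) (hn : 1 ≤ n) (α : Fin n → ℕ) :
    ((∀ i, Even (α i)) →
      (∫ x in {y : Fin n → ℝ | ∑ t, y t ^ 2 ≤ 1}, ∏ t, x t ^ α t)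
        = (∏ t, Real.Gamma (((α t : ℝ) + 1) / 2))
            / Real.Gamma ((∑ t, ((α t : ℝ) + 1) / 2) + 1)) ∧
    ((∃ i, Odd (α i)) →
      (∫ x in {y : Fin n → ℝ | ∑ t, y t ^ 2 ≤ 1}, ∏ t, x t ^ α t) = 0) := by
  have hG : Real.Gamma ((∑ t, ((α t : ℝ) + 1) / 2) + 1) ≠ 0 :=
    (Real.Gamma_pos_of_pos (by positivity)).ne'
  have key := monomialBall_mul_Gamma α
  constructor
  · intro he
    rw [eq_div_iff hG, mul_comm, key]
    exact Finset.prod_congr rfl fun t _ => gaussMoment_even (he t)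
  · rintro ⟨i, hi⟩
    rw [Finset.prod_eq_zero (Finset.mem_univ i) (gaussMoment_odd hi)] at key
    exact (mul_eq_zero.1 key).resolve_left hG
end

section
/- Set a = (√3−1)/2, b = (√7−1)/2, c = √(3−√3), e = (√3+1)/2, f = √((3+√3)/2), g = (√7+1)/2, and weights W₁ = π^{3/2}(2√7+7)/42, W₂ = π^{3/2}(√3+2)/24, W₃ = π^{3/2}(7−2√7)/42, W₄ = π^{3/2}(2−√3)/24. Consider the 10 nodes in ℝ³: (g,0,0) with weight W₃; the four points (a,c,0), (a,−c,0), (a,0,c), (a,0,−c) each with weight W₂; (−b,0,0) with weight W₁; and the four points (−e,±f,±f) (all four sign choices) each with weight W₄. Then Σ W_i p(x_i) = ∫_{ℝ³} e^{−‖x‖²} p(x) dx for every real polynomial p in 3 variables of total degree at most 4. -/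
/-!
Both sides of the identity are linear in the polynomial, so it suffices to treat a monomial
`x₀ ^ i * x₁ ^ j * x₂ ^ k` with `i + j + k ≤ 4`. By Fubini its Gaussian integral is a product
of the one-dimensional moments `∫ t ^ m * exp (-t ^ 2)`, which equal `√π, 0, √π / 2, 0, 3 √π / 4`
for `m = 0, …, 4` (odd moments vanish by symmetry, even ones are values of the Gamma function).
The remaining finitely many moment equations are identities in `ℚ(√3, √7)`, because only even
powers of `c` and `f` survive the summation over signs, and `c ^ 2`, `f ^ 2` lie in `ℚ(√3)`.
-/

open MeasureTheory

lemma gauss_integrable (n : ℕ) :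
    Integrable (fun x : ℝ => Real.exp (-x ^ 2) * x ^ n) := by
  have h := integrable_rpow_mul_exp_neg_mul_sq (b := 1) one_pos (s := n)
    (by have : (0 : ℝ) ≤ n := n.cast_nonneg
        linarith)
  refine h.congr (Filter.Eventually.of_forall fun x => ?_)
  simp [mul_comm]

lemma gauss_moment_odd (n : ℕ) (hn : Odd n) :
    ∫ x : ℝ, Real.exp (-x ^ 2) * x ^ n = 0 := by
  have h := integral_neg_eq_self (fun x : ℝ => Real.exp (-x ^ 2) * x ^ n) volume
  simp only [even_two.neg_pow, hn.neg_pow, mul_neg, integral_neg] at h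
  linarith

lemma gauss_moment_even (n : ℕ) (hn : Even n) :
    ∫ x : ℝ, Real.exp (-x ^ 2) * x ^ n = Real.Gamma (((n : ℝ) + 1) / 2) := by
  have h := integral_comp_abs (f := fun x : ℝ => Real.exp (-x ^ 2) * x ^ n)
  simp only [sq_abs, hn.pow_abs] at h
  have h2 := integral_rpow_mul_exp_neg_rpow (p := 2) (q := n) two_pos
    (by have : (0 : ℝ) ≤ n := n.cast_nonneg
        linarith)
  simp only [Real.rpow_natCast, Real.rpow_two] at h2
  simp only [mul_comm (Real.exp _)] at h ⊢
  rw [h, h2]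
  ring

lemma gauss_moment_zero : ∫ x : ℝ, Real.exp (-x ^ 2) * x ^ 0 = √Real.pi := by
  rw [gauss_moment_even 0 (by decide), ← Real.Gamma_one_half_eq]
  norm_num

lemma gauss_moment_two : ∫ x : ℝ, Real.exp (-x ^ 2) * x ^ 2 = √Real.pi / 2 := by
  rw [gauss_moment_even 2 (by decide), ← Real.Gamma_one_half_eq,
    show (((2 : ℕ) : ℝ) + 1) / 2 = 1 / 2 + 1 by norm_num, Real.Gamma_add_one (by norm_num)]
  ring

lemma gauss_moment_four : ∫ x : ℝ, Real.exp (-x ^ 2) * x ^ 4 = 3 * √Real.pi / 4 := by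
  rw [gauss_moment_even 4 (by decide), ← Real.Gamma_one_half_eq,
    show (((4 : ℕ) : ℝ) + 1) / 2 = 1 / 2 + 1 + 1 by norm_num, Real.Gamma_add_one (by norm_num),
    Real.Gamma_add_one (by norm_num)]
  ring

lemma exp_mul_prod_eq (s : Fin 3 → ℕ) (x : Fin 3 → ℝ) :
    Real.exp (-(∑ t, x t ^ 2)) * ∏ t, x t ^ s t = ∏ t, Real.exp (-x t ^ 2) * x t ^ s t := by
  rw [Finset.prod_mul_distrib, ← Real.exp_sum, Finset.sum_neg_distrib]

lemma gauss3_integrable (s : Fin 3 → ℕ) :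
    Integrable (fun x : Fin 3 → ℝ => Real.exp (-(∑ t, x t ^ 2)) * ∏ t, x t ^ s t) := by
  simp only [exp_mul_prod_eq]
  exact Integrable.fintype_prod (f := fun t (y : ℝ) => Real.exp (-y ^ 2) * y ^ s t)
    fun t => gauss_integrable (s t)

lemma gauss3_integral (s : Fin 3 → ℕ) :
    ∫ x : Fin 3 → ℝ, Real.exp (-(∑ t, x t ^ 2)) * ∏ t, x t ^ s t
      = ∏ t, ∫ y : ℝ, Real.exp (-y ^ 2) * y ^ s t := by
  simp only [exp_mul_prod_eq]
  exact integral_fintype_prod_volume_eq_prod (fun t (y : ℝ) => Real.exp (-y ^ 2) * y ^ s t)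

/-- The moment equations of the rule, where `P` stands for `π ^ (3 / 2)`, `u` for `√3`,
`v` for `√7` and `M m` for the moment of order `m` divided by `√π`. -/
lemma rule_moments (P u v c f : ℝ) (M : ℕ → ℝ) (hu : u ^ 2 = 3) (hv : v ^ 2 = 7)
    (hc : c ^ 2 = 3 - u) (hf : f ^ 2 = (3 + u) / 2)
    (h0 : M 0 = 1) (h1 : M 1 = 0) (h2 : M 2 = 1 / 2) (h3 : M 3 = 0) (h4 : M 4 = 3 / 4)
    (i j k : ℕ) (h : i + j + k ≤ 4) :
    P * (7 - 2 * v) / 42 * (((v + 1) / 2) ^ i * 0 ^ j * 0 ^ k)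
      + P * (u + 2) / 24 * (((u - 1) / 2) ^ i * c ^ j * 0 ^ k
        + ((u - 1) / 2) ^ i * (-c) ^ j * 0 ^ k
        + ((u - 1) / 2) ^ i * 0 ^ j * c ^ k
        + ((u - 1) / 2) ^ i * 0 ^ j * (-c) ^ k)
      + P * (2 * v + 7) / 42 * ((-((v - 1) / 2)) ^ i * 0 ^ j * 0 ^ k)
      + P * (2 - u) / 24 * ((-((u + 1) / 2)) ^ i * f ^ j * f ^ k
        + (-((u + 1) / 2)) ^ i * f ^ j * (-f) ^ k
        + (-((u + 1) / 2)) ^ i * (-f) ^ j * f ^ k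
        + (-((u + 1) / 2)) ^ i * (-f) ^ j * (-f) ^ k)
      = P * (M i * M j * M k) := by
  have hu4 : u ^ 4 = 9 := by rw [show u ^ 4 = (u ^ 2) ^ 2 by ring, hu]; norm_num
  have hv4 : v ^ 4 = 49 := by rw [show v ^ 4 = (v ^ 2) ^ 2 by ring, hv]; norm_num
  have hc4 : c ^ 4 = 12 - 6 * u := by
    rw [show c ^ 4 = (c ^ 2) ^ 2 by ring, hc]; linear_combination hu
  have hf4 : f ^ 4 = (12 + 6 * u) / 4 := by
    rw [show f ^ 4 = (f ^ 2) ^ 2 by ring, hf]; linear_combination hu / 4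
  have hi : i ≤ 4 := by omega
  have hj : j ≤ 4 := by omega
  have hk : k ≤ 4 := by omega
  interval_cases i <;> interval_cases j <;> interval_cases k <;> first
    | omega
    | (simp only [h0, h1, h2, h3, h4]
       ring_nf
       try simp only [hc, hf, hc4, hf4]
       try ring_nf
       try simp only [hu, hu4, hv, hv4]
       try ring_nf)


/-- 10 point rule of degree 4 for `E_3^{r²}`. -/
theorem stmt_4 (a b c e f g W1 W2 W3 W4 : ℝ)
    (ha : a = (Real.sqrt 3 - 1) / 2)
    (hb : b = (Real.sqrt 7 - 1) / 2)
    (hc : c = Real.sqrt (3 - Real.sqrt 3))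
    (he : e = (Real.sqrt 3 + 1) / 2)
    (hf : f = Real.sqrt ((3 + Real.sqrt 3) / 2))
    (hg : g = (Real.sqrt 7 + 1) / 2)
    (hW1 : W1 = Real.pi ^ ((3 : ℝ) / 2) * (2 * Real.sqrt 7 + 7) / 42)
    (hW2 : W2 = Real.pi ^ ((3 : ℝ) / 2) * (Real.sqrt 3 + 2) / 24)
    (hW3 : W3 = Real.pi ^ ((3 : ℝ) / 2) * (7 - 2 * Real.sqrt 7) / 42)
    (hW4 : W4 = Real.pi ^ ((3 : ℝ) / 2) * (2 - Real.sqrt 3) / 24)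
    :
    ∀ q : MvPolynomial (Fin 3) ℝ, q.totalDegree ≤ 4 →
      W3 * (MvPolynomial.eval ![g, 0, 0] q)
        + W2 * (MvPolynomial.eval ![a, c, 0] q
          + MvPolynomial.eval ![a, -c, 0] q
          + MvPolynomial.eval ![a, 0, c] q
          + MvPolynomial.eval ![a, 0, -c] q)
        + W1 * (MvPolynomial.eval ![-b, 0, 0] q)
        + W4 * (MvPolynomial.eval ![-e, f, f] q
          + MvPolynomial.eval ![-e, f, -f] q
          + MvPolynomial.eval ![-e, -f, f] q
          + MvPolynomial.eval ![-e, -f, -f] q)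
        = ∫ x : Fin 3 → ℝ, Real.exp (-(∑ t, x t ^ 2)) * MvPolynomial.eval x q := by
  intro q hq
  have hu : √(3 : ℝ) ^ 2 = 3 := Real.sq_sqrt (by norm_num)
  have hv : √(7 : ℝ) ^ 2 = 7 := Real.sq_sqrt (by norm_num)
  have hc2 : c ^ 2 = 3 - √3 := by
    rw [hc, Real.sq_sqrt]
    nlinarith [Real.sqrt_nonneg 3]
  have hf2 : f ^ 2 = (3 + √3) / 2 := by
    rw [hf, Real.sq_sqrt]
    positivity
  have hP : Real.pi ^ ((3 : ℝ) / 2) = √Real.pi ^ 3 := by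
    rw [Real.sqrt_eq_rpow, ← Real.rpow_natCast, ← Real.rpow_mul Real.pi_pos.le]
    norm_num
  have hpi : √Real.pi ≠ 0 := (Real.sqrt_pos.2 Real.pi_pos).ne'
  have key : ∀ s ∈ q.support,
      W3 * (∏ t, (![g, 0, 0] : Fin 3 → ℝ) t ^ s t)
        + W2 * (∏ t, (![a, c, 0] : Fin 3 → ℝ) t ^ s t
          + ∏ t, (![a, -c, 0] : Fin 3 → ℝ) t ^ s t
          + ∏ t, (![a, 0, c] : Fin 3 → ℝ) t ^ s t
          + ∏ t, (![a, 0, -c] : Fin 3 → ℝ) t ^ s t)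
        + W1 * (∏ t, (![-b, 0, 0] : Fin 3 → ℝ) t ^ s t)
        + W4 * (∏ t, (![-e, f, f] : Fin 3 → ℝ) t ^ s t
          + ∏ t, (![-e, f, -f] : Fin 3 → ℝ) t ^ s t
          + ∏ t, (![-e, -f, f] : Fin 3 → ℝ) t ^ s t
          + ∏ t, (![-e, -f, -f] : Fin 3 → ℝ) t ^ s t)
        = ∫ x : Fin 3 → ℝ, Real.exp (-(∑ t, x t ^ 2)) * ∏ t, x t ^ s t := by
    intro s hs
    have hdeg : s 0 + s 1 + s 2 ≤ 4 := by
      have h := (MvPolynomial.le_totalDegree hs).trans hq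
      rwa [Finsupp.sum_fintype _ _ (fun _ => rfl), Fin.sum_univ_three] at h
    have h := rule_moments (√Real.pi ^ 3) √3 √7 c f
      (fun m => (∫ y : ℝ, Real.exp (-y ^ 2) * y ^ m) / √Real.pi) hu hv hc2 hf2
      (by rw [gauss_moment_zero, div_self hpi])
      (by rw [gauss_moment_odd 1 (by decide), zero_div])
      (by rw [gauss_moment_two]; field_simp)
      (by rw [gauss_moment_odd 3 (by decide), zero_div])
      (by rw [gauss_moment_four]; field_simp) (s 0) (s 1) (s 2) hdeg
    rw [gauss3_integral, hW1, hW2, hW3, hW4, ha, hb, he, hg, hP]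
    simp only [Fin.prod_univ_three, Matrix.cons_val_zero, Matrix.cons_val_one, Matrix.cons_val]
    rw [h]
    field_simp
  have hint : ∫ x : Fin 3 → ℝ, Real.exp (-(∑ t, x t ^ 2)) * MvPolynomial.eval x q
      = ∑ s ∈ q.support, q.coeff s *
        ∫ x : Fin 3 → ℝ, Real.exp (-(∑ t, x t ^ 2)) * ∏ t, x t ^ s t := by
    simp only [MvPolynomial.eval_eq', Finset.mul_sum, mul_left_comm (Real.exp _)]
    rw [integral_finsetSum]
    · simp only [integral_const_mul]
    · exact fun s _ => (gauss3_integrable s).const_mul _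
  rw [hint, ← Finset.sum_congr rfl fun s hs => congrArg (q.coeff s * ·) (key s hs)]
  simp only [MvPolynomial.eval_eq', Finset.mul_sum, ← Finset.sum_add_distrib]
  exact Finset.sum_congr rfl fun s _ => by ring
end

section
/- Set a = (2√3−1)/√77, b = (2√203−√77)/35, c = √((48−8√3)/77), e = (2√3+1)/√77, f = √((24+4√3)/77), g = (2√203+√77)/35, and weights W₁ = π(841+32√319)/5220, W₂ = 7π(13+4√3)/720, W₃ = π(841−32√319)/5220, W₄ = 7π(13−4√3)/720. Consider the 10 nodes in ℝ³: (g,0,0) with weight W₃; the four points (a,c,0), (a,−c,0), (a,0,c), (a,0,−c) each with weight W₂; (−b,0,0) with weight W₁; and the four points (−e,±f,±f) (all four sign choices) each with weight W₄. Then Σ W_i p(x_i) = ∫_{‖x‖≤1} p(x) dx for every real polynomial p in 3 variables of total degree at most 4. -/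
/-!
Both sides are linear in the polynomial, so it suffices to compare them on the monomials
`x₀ⁱ x₁ʲ x₂ᵏ` with `i + j + k ≤ 4`.

The moments of the ball come from its orthogonal invariance (`integral_ball3_comp_matrix`) and the
radial integrals `∫ ‖x‖²ⁿ = 4π / (2n + 3)` (`integral_ball3_radial`). Reflections kill every moment
with an odd exponent and coordinate swaps identify the rest up to permutation, so the case `n = 1`
gives `∫ x₀² = 4π / 15`. A rotation by `π / 4` gives `∫ x₀⁴ = 3 ∫ x₀² x₁²`, and the case `n = 2`
then determines both quartic moments. The cubature sums are compared with these values in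
`cubature_monomial`.
-/

open MeasureTheory

/-! ### Moments of the unit ball -/

/-- The closed Euclidean unit ball of `ℝ³`, as a subset of `Fin 3 → ℝ` (whose own norm is the
sup norm). -/
def ball3 : Set (Fin 3 → ℝ) := {y | ∑ t, y t ^ 2 ≤ 1}

/-- The moment `∫ x₀ⁱ x₁ʲ x₂ᵏ` of Lebesgue measure on the unit ball. -/
noncomputable def moment (i j k : ℕ) : ℝ := ∫ x in ball3, x 0 ^ i * x 1 ^ j * x 2 ^ k

lemma isCompact_ball3 : IsCompact ball3 := by
  refine (isCompact_Icc (a := fun _ : Fin 3 => (-1 : ℝ)) (b := fun _ => 1)).of_isClosed_subset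
    (isClosed_le (by fun_prop) continuous_const) fun y hy => ?_
  have hy' : ∀ t, y t ^ 2 ≤ 1 := fun t =>
    (Finset.single_le_sum (f := fun t => y t ^ 2) (fun _ _ => sq_nonneg _)
      (Finset.mem_univ t)).trans hy
  exact ⟨fun t => (abs_le.1 ((sq_le_one_iff_abs_le_one _).1 (hy' t))).1,
    fun t => (abs_le.1 ((sq_le_one_iff_abs_le_one _).1 (hy' t))).2⟩

lemma integrableOn_ball3 {F : (Fin 3 → ℝ) → ℝ} (hF : Continuous F) : IntegrableOn F ball3 :=
  hF.continuousOn.integrableOn_compact isCompact_ball3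

/-- Orthogonal matrices preserve both Lebesgue measure and the ball. -/
lemma integral_ball3_comp_matrix (M : Matrix (Fin 3) (Fin 3) ℝ) (hM : M.transpose * M = 1)
    (F : (Fin 3 → ℝ) → ℝ) :
    ∫ x in ball3, F (M.mulVec x) = ∫ x in ball3, F x := by
  have hdet : M.det * M.det = 1 := by
    simpa [Matrix.det_mul] using congrArg Matrix.det hM
  have hne : M.det ≠ 0 := by rintro h; simp [h] at hdet
  have habs : |M.det⁻¹| = 1 := by
    rcases mul_self_eq_one_iff.1 hdet with h | h <;> simp [h]
  have hmp : MeasurePreserving (Matrix.toLin' M) := by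
    refine ⟨(LinearMap.continuous_on_pi _).measurable, ?_⟩
    rw [Real.map_matrix_volume_pi_eq_smul_volume_pi hne, habs]
    simp
  have hinj : LinearMap.ker (Matrix.toLin' M) = ⊥ := by
    refine LinearMap.ker_eq_bot.2 (Function.LeftInverse.injective (g := M.transpose.mulVec) ?_)
    intro x
    simp [hM]
  have hemb : MeasurableEmbedding (Matrix.toLin' M) :=
    (LinearMap.isClosedEmbedding_of_injective hinj).measurableEmbedding
  have hpre : Matrix.toLin' M ⁻¹' ball3 = ball3 := by
    ext x
    have : M.mulVec x ⬝ᵥ M.mulVec x = x ⬝ᵥ x := by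
      rw [Matrix.dotProduct_mulVec, Matrix.vecMul_mulVec, hM, Matrix.vecMul_one]
    simp only [dotProduct, ← pow_two] at this
    simp [ball3, this]
  have := hmp.setIntegral_preimage_emb hemb F ball3
  rw [hpre] at this
  simpa using this

/-- Radial moments of the ball, by integration in spherical shells. -/
lemma integral_ball3_radial (n : ℕ) :
    ∫ x in ball3, (∑ t, x t ^ 2) ^ n = 4 * Real.pi / (2 * n + 3) := by
  have hmeas : MeasurableSet ball3 := isCompact_ball3.isClosed.measurableSet
  rw [← integral_indicator hmeas,
    ← (PiLp.volume_preserving_ofLp (Fin 3)).integral_comp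
      (MeasurableEquiv.toLp 2 (Fin 3 → ℝ)).symm.measurableEmbedding]
  have h1 : ∀ x : EuclideanSpace ℝ (Fin 3),
      ball3.indicator (fun x : Fin 3 → ℝ => (∑ t, x t ^ 2) ^ n) (WithLp.ofLp x)
        = (Set.Iic (1 : ℝ)).indicator (fun r => r ^ (2 * n)) ‖x‖ := by
    intro x
    have hx : ‖x‖ ^ 2 = ∑ t, x t ^ 2 := EuclideanSpace.real_norm_sq_eq x
    have hmem : WithLp.ofLp x ∈ ball3 ↔ ‖x‖ ≤ 1 := by
      change ∑ t, x t ^ 2 ≤ 1 ↔ _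
      rw [← hx, sq_le_one_iff₀ (norm_nonneg _)]
    by_cases h : ‖x‖ ≤ 1
    · rw [Set.indicator_of_mem (hmem.2 h), Set.indicator_of_mem (Set.mem_Iic.2 h), pow_mul, hx]
    · rw [Set.indicator_of_notMem (mt hmem.1 h), Set.indicator_of_notMem (mt Set.mem_Iic.1 h)]
  simp_rw [h1]
  rw [integral_fun_norm_addHaar]
  have h2 : ∫ y in Set.Ioi (0 : ℝ), y ^ (Module.finrank ℝ (EuclideanSpace ℝ (Fin 3)) - 1) •
      (Set.Iic (1 : ℝ)).indicator (fun r => r ^ (2 * n)) y = 1 / (2 * n + 3) := by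
    have : ∀ y : ℝ, y ^ (Module.finrank ℝ (EuclideanSpace ℝ (Fin 3)) - 1) •
      (Set.Iic (1 : ℝ)).indicator (fun r => r ^ (2 * n)) y
        = (Set.Iic (1 : ℝ)).indicator (fun r => r ^ (2 * n + 2)) y := by
      intro y
      by_cases h : y ≤ 1 <;> simp [h, pow_add, mul_comm]
    simp_rw [this]
    rw [setIntegral_indicator measurableSet_Iic, Set.Ioi_inter_Iic,
      ← intervalIntegral.integral_of_le zero_le_one, integral_pow]
    push_cast
    simp
    ring
  rw [h2]
  simp [measureReal_def, InnerProductSpace.volume_ball_of_dim_odd (k := 1)]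
  rw [ENNReal.toReal_ofReal (by positivity)]
  field_simp
  norm_num

lemma moment_odd0 (i j k : ℕ) (h : Odd i) : moment i j k = 0 := by
  have := integral_ball3_comp_matrix !![-1, 0, 0; 0, 1, 0; 0, 0, 1]
    (by ext a b; fin_cases a <;> fin_cases b <;> simp [Matrix.mul_apply, Fin.sum_univ_three])
    (fun x => x 0 ^ i * x 1 ^ j * x 2 ^ k)
  simp [Matrix.mulVec, dotProduct, Fin.sum_univ_three, h.neg_pow, integral_neg] at this
  rw [moment]; linarith

lemma moment_swap01 (i j k : ℕ) : moment i j k = moment j i k := by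
  have := integral_ball3_comp_matrix !![0, 1, 0; 1, 0, 0; 0, 0, 1]
    (by ext a b; fin_cases a <;> fin_cases b <;> simp [Matrix.mul_apply, Fin.sum_univ_three])
    (fun x => x 0 ^ i * x 1 ^ j * x 2 ^ k)
  simp [Matrix.mulVec, dotProduct, Fin.sum_univ_three] at this
  rw [moment, ← this, moment]; simp_rw [mul_comm]

lemma moment_swap12 (i j k : ℕ) : moment i j k = moment i k j := by
  have := integral_ball3_comp_matrix !![1, 0, 0; 0, 0, 1; 0, 1, 0]
    (by ext a b; fin_cases a <;> fin_cases b <;> simp [Matrix.mul_apply, Fin.sum_univ_three])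
    (fun x => x 0 ^ i * x 1 ^ j * x 2 ^ k)
  simp [Matrix.mulVec, dotProduct, Fin.sum_univ_three] at this
  rw [moment, ← this, moment]; simp_rw [mul_right_comm]

lemma moment_odd1 (i j k : ℕ) (h : Odd j) : moment i j k = 0 := by
  rw [moment_swap01, moment_odd0 _ _ _ h]

lemma moment_odd2 (i j k : ℕ) (h : Odd k) : moment i j k = 0 := by
  rw [moment_swap12, moment_odd1 _ _ _ h]

lemma moment_zero : moment 0 0 0 = 4 * Real.pi / 3 := by
  simpa [moment] using integral_ball3_radial 0

lemma moment_two : moment 2 0 0 = 4 * Real.pi / 15 := by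
  have h := integral_ball3_radial 1
  simp only [Fin.sum_univ_three, pow_one] at h
  rw [integral_add (integrableOn_ball3 (by fun_prop)) (integrableOn_ball3 (by fun_prop)),
    integral_add (integrableOn_ball3 (by fun_prop)) (integrableOn_ball3 (by fun_prop))] at h
  have h1 := moment_swap01 0 2 0
  have h2 := moment_swap12 0 0 2
  simp only [moment, pow_zero, mul_one, one_mul] at h1 h2 ⊢
  rw [h2, h1] at h
  norm_num at h
  linarith

/-- Rotating by `π/4` in the first two coordinates turns `x₀ x₁` into `(x₀² - x₁²) / 2`. -/
lemma moment_four_eq : moment 4 0 0 = 3 * moment 2 2 0 := by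
  have hs : (√2 / 2 : ℝ) * (√2 / 2) = 1 / 2 := by
    have := Real.mul_self_sqrt (zero_le_two (α := ℝ)); linarith
  have h := integral_ball3_comp_matrix
    !![√2 / 2, √2 / 2, 0; √2 / 2, -(√2 / 2), 0; 0, 0, 1]
    (by
      ext a b
      fin_cases a <;> fin_cases b <;> simp [Matrix.mul_apply, Fin.sum_univ_three, hs] <;> norm_num)
    (fun x => x 0 ^ 2 * x 1 ^ 2 * x 2 ^ 0)
  have hpt : ∀ x y : ℝ, (√2 / 2 * x + √2 / 2 * y) ^ 2 * (√2 / 2 * x + -(√2 / 2 * y)) ^ 2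
      = 1 / 4 * x ^ 4 + 1 / 4 * y ^ 4 - 1 / 2 * (x ^ 2 * y ^ 2) := by
    intro x y
    have h4 : (√2 / 2 : ℝ) ^ 4 = 1 / 4 := by
      calc (√2 / 2 : ℝ) ^ 4 = ((√2 / 2) * (√2 / 2)) ^ 2 := by ring
        _ = 1 / 4 := by rw [hs]; norm_num
    linear_combination (x ^ 2 - y ^ 2) ^ 2 * h4
  simp [Matrix.mulVec, dotProduct, Fin.sum_univ_three] at h
  simp_rw [hpt] at h
  rw [integral_sub (integrableOn_ball3 (by fun_prop)) (integrableOn_ball3 (by fun_prop)),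
    integral_add (integrableOn_ball3 (by fun_prop)) (integrableOn_ball3 (by fun_prop)),
    integral_const_mul, integral_const_mul, integral_const_mul] at h
  have h1 := moment_swap01 0 4 0
  simp only [moment, pow_zero, mul_one, one_mul] at h1 ⊢
  rw [h1] at h
  linarith

lemma moment_two_two : moment 2 2 0 = 4 * Real.pi / 105 := by
  have h := integral_ball3_radial 2
  have hpt : ∀ x : Fin 3 → ℝ, (∑ t, x t ^ 2) ^ 2 = x 0 ^ 4 + x 1 ^ 4 + x 2 ^ 4
      + 2 * (x 0 ^ 2 * x 1 ^ 2) + 2 * (x 0 ^ 2 * x 2 ^ 2) + 2 * (x 1 ^ 2 * x 2 ^ 2) := by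
    intro x; rw [Fin.sum_univ_three]; ring
  simp_rw [hpt] at h
  iterate 5
    rw [integral_add (integrableOn_ball3 (by fun_prop)) (integrableOn_ball3 (by fun_prop))] at h
  simp only [integral_const_mul] at h
  have h0 := moment_four_eq
  have h1 := moment_swap01 0 4 0
  have h2 := moment_swap12 0 0 4
  have h3 := moment_swap12 2 0 2
  have h4 := moment_swap01 0 2 2
  simp only [moment, pow_zero, mul_one, one_mul] at h0 h1 h2 h3 h4 ⊢
  rw [h4, h3, h2, h1, h0] at h
  norm_num at h
  linarith

lemma moment_four : moment 4 0 0 = 4 * Real.pi / 35 := by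
  rw [moment_four_eq, moment_two_two]; ring

/-! ### The cubature sums -/

/-- The rule is exact on each monomial of degree at most four. Odd exponents of the last two
coordinates cancel by the sign symmetries of the node set; the remaining cases are identities in
`r = √3`, `s = √77`, `t = √203`, since `√319 = s t / 7` and only even powers of `c`, `f` occur. -/
lemma cubature_monomial (a b c e f g W1 W2 W3 W4 : ℝ)
    (ha : a = (2 * Real.sqrt 3 - 1) / Real.sqrt 77)
    (hb : b = (2 * Real.sqrt 203 - Real.sqrt 77) / 35)
    (hc : c = Real.sqrt ((48 - 8 * Real.sqrt 3) / 77))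
    (he : e = (2 * Real.sqrt 3 + 1) / Real.sqrt 77)
    (hf : f = Real.sqrt ((24 + 4 * Real.sqrt 3) / 77))
    (hg : g = (2 * Real.sqrt 203 + Real.sqrt 77) / 35)
    (hW1 : W1 = Real.pi * (841 + 32 * Real.sqrt 319) / 5220)
    (hW2 : W2 = 7 * Real.pi * (13 + 4 * Real.sqrt 3) / 720)
    (hW3 : W3 = Real.pi * (841 - 32 * Real.sqrt 319) / 5220)
    (hW4 : W4 = 7 * Real.pi * (13 - 4 * Real.sqrt 3) / 720)
    (i j k : ℕ) (h : i + j + k ≤ 4) :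
      W3 * (g ^ i * 0 ^ j * 0 ^ k)
        + W2 * (a ^ i * c ^ j * 0 ^ k
          + a ^ i * (-c) ^ j * 0 ^ k
          + a ^ i * 0 ^ j * c ^ k
          + a ^ i * 0 ^ j * (-c) ^ k)
        + W1 * ((-b) ^ i * 0 ^ j * 0 ^ k)
        + W4 * ((-e) ^ i * f ^ j * f ^ k
          + (-e) ^ i * f ^ j * (-f) ^ k
          + (-e) ^ i * (-f) ^ j * f ^ k
          + (-e) ^ i * (-f) ^ j * (-f) ^ k) = moment i j k := by
  by_cases hj : Odd j
  · have : j ≠ 0 := by rintro rfl; simp at hj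
    rw [moment_odd1 _ _ _ hj]; simp only [hj.neg_pow, zero_pow this]; ring
  by_cases hk : Odd k
  · have : k ≠ 0 := by rintro rfl; simp at hk
    rw [moment_odd2 _ _ _ hk]; simp only [hk.neg_pow, zero_pow this]; ring
  obtain ⟨r, hr⟩ : ∃ r, r = Real.sqrt 3 := ⟨_, rfl⟩
  obtain ⟨s, hs⟩ : ∃ s, s = Real.sqrt 77 := ⟨_, rfl⟩
  obtain ⟨t, ht⟩ : ∃ t, t = Real.sqrt 203 := ⟨_, rfl⟩
  have hr2 : r ^ 2 = 3 := by rw [hr]; norm_num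
  have hs2 : s ^ 2 = 77 := by rw [hs]; norm_num
  have ht2 : t ^ 2 = 203 := by rw [ht]; norm_num
  have hs0 : s ≠ 0 := by rintro rfl; norm_num at hs2
  have hu : Real.sqrt 319 = s * t / 7 := by
    rw [hs, ht, ← Real.sqrt_mul (by norm_num), show (77 : ℝ) * 203 = 7 ^ 2 * 319 by norm_num,
      Real.sqrt_mul (by positivity), Real.sqrt_sq (by positivity)]
    ring
  have hc2 : c ^ 2 = (48 - 8 * r) / 77 := by
    rw [hc, hr, Real.sq_sqrt]
    have : Real.sqrt 3 ≤ 2 := Real.sqrt_le_iff.2 (by norm_num)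
    linarith
  have hf2 : f ^ 2 = (24 + 4 * r) / 77 := by
    rw [hf, hr, Real.sq_sqrt]
    positivity
  rw [← hr, ← hs] at ha he
  rw [← hs, ← ht] at hb hg
  rw [hu] at hW1 hW3
  rw [← hr] at hW2 hW4
  have ha : a = (2 * r - 1) * s / 77 := by rw [ha, ← hs2]; field_simp
  have he : e = (2 * r + 1) * s / 77 := by rw [he, ← hs2]; field_simp
  clear hc hf hr hs ht hu
  have hr3 : r ^ 3 = 3 * r := by linear_combination r * hr2
  have hr4 : r ^ 4 = 9 := by linear_combination (r ^ 2 + 3) * hr2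
  have hs3 : s ^ 3 = 77 * s := by linear_combination s * hs2
  have hs4 : s ^ 4 = 77 ^ 2 := by linear_combination (s ^ 2 + 77) * hs2
  have ht4 : t ^ 4 = 203 ^ 2 := by linear_combination (t ^ 2 + 203) * ht2
  have hc4 : c ^ 4 = ((48 - 8 * r) / 77) ^ 2 := by rw [← hc2]; ring
  have hf4 : f ^ 4 = ((24 + 4 * r) / 77) ^ 2 := by rw [← hf2]; ring
  have hi4 : i ≤ 4 := by omega
  have hj4 : j ≤ 4 := by omega
  have hk4 : k ≤ 4 := by omega
  have o1 : Odd 1 := by decide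
  have o3 : Odd 3 := by decide
  have h020 : moment 0 2 0 = 4 * Real.pi / 15 := by rw [moment_swap01, moment_two]
  have h002 : moment 0 0 2 = 4 * Real.pi / 15 := by rw [moment_swap12, h020]
  have h040 : moment 0 4 0 = 4 * Real.pi / 35 := by rw [moment_swap01, moment_four]
  have h004 : moment 0 0 4 = 4 * Real.pi / 35 := by rw [moment_swap12, h040]
  have h202 : moment 2 0 2 = 4 * Real.pi / 105 := by rw [moment_swap12, moment_two_two]
  have h022 : moment 0 2 2 = 4 * Real.pi / 105 := by rw [moment_swap01, h202]
  interval_cases j <;> first | exact absurd (by decide) hj | skip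
  all_goals interval_cases k <;> first | exact absurd (by decide) hk | skip
  all_goals interval_cases i <;> first | omega | skip
  all_goals
    simp only [moment_zero, moment_two, h020, h002, moment_four, h040, h004, moment_two_two, h202,
      h022, moment_odd0 _ _ _ o1, moment_odd0 _ _ _ o3]
    rw [hW1, hW2, hW3, hW4, ha, he, hb, hg]
    -- Reduce all powers to normal form; the second pass handles the powers of `r` that appear
    -- when `c ^ 2` and `f ^ 2` are expanded.
    ring_nf
    try simp only [hr2, hr3, hr4, hs2, hs3, hs4, ht2, ht4, hc2, hc4, hf2, hf4]
    try ring_nf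
    try simp only [hr2, hr3]
    try ring_nf

/-- 10 point rule of degree 4 for `S_3`. -/
theorem stmt_5 (a b c e f g W1 W2 W3 W4 : ℝ)
    (ha : a = (2 * Real.sqrt 3 - 1) / Real.sqrt 77)
    (hb : b = (2 * Real.sqrt 203 - Real.sqrt 77) / 35)
    (hc : c = Real.sqrt ((48 - 8 * Real.sqrt 3) / 77))
    (he : e = (2 * Real.sqrt 3 + 1) / Real.sqrt 77)
    (hf : f = Real.sqrt ((24 + 4 * Real.sqrt 3) / 77))
    (hg : g = (2 * Real.sqrt 203 + Real.sqrt 77) / 35)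
    (hW1 : W1 = Real.pi * (841 + 32 * Real.sqrt 319) / 5220)
    (hW2 : W2 = 7 * Real.pi * (13 + 4 * Real.sqrt 3) / 720)
    (hW3 : W3 = Real.pi * (841 - 32 * Real.sqrt 319) / 5220)
    (hW4 : W4 = 7 * Real.pi * (13 - 4 * Real.sqrt 3) / 720)
    :
    ∀ q : MvPolynomial (Fin 3) ℝ, q.totalDegree ≤ 4 →
      W3 * (MvPolynomial.eval ![g, 0, 0] q)
        + W2 * (MvPolynomial.eval ![a, c, 0] q
          + MvPolynomial.eval ![a, -c, 0] q
          + MvPolynomial.eval ![a, 0, c] q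
          + MvPolynomial.eval ![a, 0, -c] q)
        + W1 * (MvPolynomial.eval ![-b, 0, 0] q)
        + W4 * (MvPolynomial.eval ![-e, f, f] q
          + MvPolynomial.eval ![-e, f, -f] q
          + MvPolynomial.eval ![-e, -f, f] q
          + MvPolynomial.eval ![-e, -f, -f] q)
        = ∫ x in {y : Fin 3 → ℝ | ∑ t, y t ^ 2 ≤ 1}, MvPolynomial.eval x q := by
  intro q hq
  change _ = ∫ x in ball3, MvPolynomial.eval x q
  have hev : ∀ x : Fin 3 → ℝ, MvPolynomial.eval x q
      = ∑ d ∈ q.support, q.coeff d * (x 0 ^ d 0 * x 1 ^ d 1 * x 2 ^ d 2) := by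
    intro x
    rw [MvPolynomial.eval_eq']
    simp only [Fin.prod_univ_three]
  have hint : ∫ x in ball3, MvPolynomial.eval x q
      = ∑ d ∈ q.support, q.coeff d * moment (d 0) (d 1) (d 2) := by
    simp_rw [hev]
    rw [integral_finsetSum _ fun d _ => integrableOn_ball3 (by fun_prop)]
    simp only [integral_const_mul, moment]
  rw [hint]
  simp only [hev, ← Finset.sum_add_distrib, Finset.mul_sum]
  refine Finset.sum_congr rfl fun d hd => ?_
  have hdeg : d 0 + d 1 + d 2 ≤ 4 := by
    have := (MvPolynomial.le_totalDegree hd).trans hq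
    rwa [Finsupp.sum_fintype _ _ fun _ => rfl, Fin.sum_univ_three] at this
  rw [← cubature_monomial a b c e f g W1 W2 W3 W4 ha hb hc he hf hg hW1 hW2 hW3 hW4 _ _ _ hdeg]
  simp only [Matrix.cons_val]
  ring
end

section
/- Set a = (3√3−√15)/12, b = (√15−√3)/6, c = (√15+√3)/6, e = (√15+√3)/4, f = √3, g = (3√15−√3)/4, and weights W₀ = π²/12, W₁ = 9π²/100, W₂ = π²/300. Consider the 16 nodes in ℝ⁴: the origin with weight W₀; the 6 distinct coordinate permutations of (c,c,−b,−b), each with weight W₁; the 4 distinct coordinate permutations of (−e,−a,−a,−a), each with weight W₁; the point (f,f,f,f) with weight W₂; and the 4 distinct coordinate permutations of (g,−e,−e,−e), each with weight W₂. Then Σ W_i p(x_i) = ∫_{ℝ⁴} e^{−‖x‖²} p(x) dx for every real polynomial p in 4 variables of total degree at most 4. -/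
/-!
Both sides are linear in the polynomial, so it suffices to treat monomials `x^d` with `|d| ≤ 4`.
On the integral side Fubini factors the moment into one-dimensional Gaussian moments
`∫ t^n e^{-t²} dt`, which integration by parts reduces to the Gaussian integral (`n` even) or to
zero (`n` odd): `gaussian_moment`. On the discrete side, writing `√15 = √3 √5`, the value of the
rule on each of the 70 monomials is an element of `π² ℚ(√3, √5)` which is reduced using
`√3² = 3` and `√5² = 5`: `rule_monomial`.
-/

open MeasureTheory

/-- The normalized one-dimensional moments `π^{-1/2} ∫ t^n e^{-t²} dt` for `n ≤ 4`
(the value `0` for `n ≥ 5` is a placeholder). -/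
noncomputable def normMoment : ℕ → ℝ
  | 0 => 1
  | 1 => 0
  | 2 => 1 / 2
  | 3 => 0
  | 4 => 3 / 4
  | _ => 0

lemma integrable_pow_mul_gaussian (n : ℕ) :
    Integrable (fun t : ℝ => t ^ n * Real.exp (-t ^ 2)) := by
  have h := integrable_rpow_mul_exp_neg_mul_sq (b := 1) one_pos (s := n)
    (by have : (0 : ℝ) ≤ n := n.cast_nonneg
        linarith)
  simpa using h

lemma hasDerivAt_gaussian (t : ℝ) :
    HasDerivAt (fun t : ℝ => Real.exp (-t ^ 2)) (-2 * t * Real.exp (-t ^ 2)) t := by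
  have h : HasDerivAt (fun t : ℝ => -t ^ 2) (-(2 * t)) t := by
    simpa using (hasDerivAt_pow 2 t).fun_neg
  exact h.exp.congr_deriv (by ring)

/-- Integrating the derivative of `t^{n+1} e^{-t²}` gives the two-step moment recursion. -/
lemma gaussian_moment_succ_succ (n : ℕ) :
    ∫ t : ℝ, t ^ (n + 2) * Real.exp (-t ^ 2)
      = (n + 1) / 2 * ∫ t : ℝ, t ^ n * Real.exp (-t ^ 2) := by
  have hd : ∀ t : ℝ, HasDerivAt (fun t : ℝ => t ^ (n + 1) * Real.exp (-t ^ 2))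
      ((n + 1) * (t ^ n * Real.exp (-t ^ 2)) - 2 * (t ^ (n + 2) * Real.exp (-t ^ 2))) t := by
    intro t
    refine ((hasDerivAt_pow (n + 1) t).fun_mul (hasDerivAt_gaussian t)).congr_deriv ?_
    rw [Nat.add_sub_cancel]
    push_cast
    ring
  have h1 := (integrable_pow_mul_gaussian n).const_mul ((n : ℝ) + 1)
  have h2 := (integrable_pow_mul_gaussian (n + 2)).const_mul 2
  have h := integral_eq_zero_of_hasDerivAt_of_integrable hd (h1.sub h2)
    (integrable_pow_mul_gaussian (n + 1))
  rw [integral_sub h1 h2, integral_const_mul, integral_const_mul] at h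
  linarith

lemma gaussian_moment (n : ℕ) (hn : n ≤ 4) :
    ∫ t : ℝ, Real.exp (-t ^ 2) * t ^ n = √Real.pi * normMoment n := by
  have h0 : ∫ t : ℝ, t ^ 0 * Real.exp (-t ^ 2) = √Real.pi := by
    simpa using integral_gaussian 1
  have h1 : ∫ t : ℝ, t ^ 1 * Real.exp (-t ^ 2) = 0 := by
    have hint := (integrable_pow_mul_gaussian 1).const_mul (-2)
    have h := integral_eq_zero_of_hasDerivAt_of_integrable
      (f' := fun t : ℝ => -2 * (t ^ 1 * Real.exp (-t ^ 2)))
      (fun t => (hasDerivAt_gaussian t).congr_deriv (by ring))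
      hint (by simpa using integrable_pow_mul_gaussian 0)
    rw [integral_const_mul] at h
    linarith
  have h2 := gaussian_moment_succ_succ 0
  have h3 := gaussian_moment_succ_succ 1
  have h4 := gaussian_moment_succ_succ 2
  rw [h0] at h2
  rw [h1] at h3
  norm_num at h2 h3
  rw [h2] at h4
  norm_num at h4
  simp_rw [mul_comm (Real.exp _)]
  interval_cases n
  · simpa [normMoment] using h0
  · simpa [normMoment] using h1
  · rw [h2, normMoment]
    ring
  · simpa [normMoment] using h3
  · rw [h4, normMoment]
    ring

lemma gaussian_mul_monomial (d : Fin 4 → ℕ) (x : Fin 4 → ℝ) :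
    Real.exp (-(∑ t, x t ^ 2)) * ∏ i, x i ^ d i
      = ∏ i, (Real.exp (-x i ^ 2) * x i ^ d i) := by
  rw [Finset.prod_mul_distrib, ← Real.exp_sum, Finset.sum_neg_distrib]

lemma integrable_gaussian_mul_monomial (d : Fin 4 → ℕ) :
    Integrable (fun x : Fin 4 → ℝ => Real.exp (-(∑ t, x t ^ 2)) * ∏ i, x i ^ d i) := by
  simp_rw [gaussian_mul_monomial d]
  refine Integrable.fintype_prod (f := fun i (t : ℝ) => Real.exp (-t ^ 2) * t ^ d i) fun i => ?_
  simpa [mul_comm] using integrable_pow_mul_gaussian (d i)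

lemma integral_gaussian_mul_monomial (d : Fin 4 → ℕ) (hd : ∀ i, d i ≤ 4) :
    ∫ x : Fin 4 → ℝ, Real.exp (-(∑ t, x t ^ 2)) * ∏ i, x i ^ d i
      = Real.pi ^ 2 * (normMoment (d 0) * normMoment (d 1) * normMoment (d 2)
          * normMoment (d 3)) := by
  simp_rw [gaussian_mul_monomial d]
  rw [integral_fintype_prod_volume_eq_prod (fun i (t : ℝ) => Real.exp (-t ^ 2) * t ^ d i)]
  simp_rw [fun i => gaussian_moment (d i) (hd i)]
  rw [Fin.prod_univ_four]
  have h : √Real.pi ^ 2 = Real.pi := Real.sq_sqrt Real.pi_pos.le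
  calc _ = (√Real.pi ^ 2) ^ 2 * (normMoment (d 0) * normMoment (d 1) * normMoment (d 2)
          * normMoment (d 3)) := by ring
    _ = _ := by rw [h]

/-- The rule divided by `π²` has the right value on every monomial of degree at most `4`.
Here `s` and `r` stand for `√3` and `√5`. -/
lemma rule_monomial (s r a b c e g : ℝ) (hs : s ^ 2 = 3) (hr : r ^ 2 = 5)
    (ha : a = (3 * s - s * r) / 12) (hb : b = (s * r - s) / 6)
    (hc : c = (s * r + s) / 6) (he : e = (s * r + s) / 4)
    (hg : g = (3 * (s * r) - s) / 4)
    (i j k l : ℕ) (h : i + j + k + l ≤ 4) :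
    1 / 12 * (0 ^ i * 0 ^ j * 0 ^ k * 0 ^ l)
      + 9 / 100 * ((-b) ^ i * (-b) ^ j * c ^ k * c ^ l
        + (-b) ^ i * c ^ j * (-b) ^ k * c ^ l
        + (-b) ^ i * c ^ j * c ^ k * (-b) ^ l
        + c ^ i * (-b) ^ j * (-b) ^ k * c ^ l
        + c ^ i * (-b) ^ j * c ^ k * (-b) ^ l
        + c ^ i * c ^ j * (-b) ^ k * (-b) ^ l
        + (-a) ^ i * (-a) ^ j * (-a) ^ k * (-e) ^ l
        + (-a) ^ i * (-a) ^ j * (-e) ^ k * (-a) ^ l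
        + (-a) ^ i * (-e) ^ j * (-a) ^ k * (-a) ^ l
        + (-e) ^ i * (-a) ^ j * (-a) ^ k * (-a) ^ l)
      + 1 / 300 * (s ^ i * s ^ j * s ^ k * s ^ l
        + (-e) ^ i * (-e) ^ j * (-e) ^ k * g ^ l
        + (-e) ^ i * (-e) ^ j * g ^ k * (-e) ^ l
        + (-e) ^ i * g ^ j * (-e) ^ k * (-e) ^ l
        + g ^ i * (-e) ^ j * (-e) ^ k * (-e) ^ l)
      = normMoment i * normMoment j * normMoment k * normMoment l := by
  have hs4 : s ^ 4 = 9 := by linear_combination (s ^ 2 + 3) * hs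
  have hr4 : r ^ 4 = 25 := by linear_combination (r ^ 2 + 5) * hr
  subst ha hb hc he hg
  have hi : i ≤ 4 := by omega
  have hj : j ≤ 4 - i := by omega
  have hk : k ≤ 4 - i - j := by omega
  have hl : l ≤ 4 - i - j - k := by omega
  clear h
  interval_cases i <;> interval_cases j <;> interval_cases k <;> interval_cases l <;>
    simp only [normMoment, pow_zero, ne_eq, OfNat.ofNat_ne_zero, not_false_eq_true, zero_pow,
      one_ne_zero, mul_one, one_mul, mul_zero, zero_mul] <;>
    ring_nf <;> simp only [hs, hs4, hr, hr4] <;> ring_nf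

/-- 16 point rule of degree 4 for `E_4^{r²}` (group 1). -/
theorem stmt_6 (a b c e f g W0 W1 W2 : ℝ)
    (ha : a = (3 * Real.sqrt 3 - Real.sqrt 15) / 12)
    (hb : b = (Real.sqrt 15 - Real.sqrt 3) / 6)
    (hc : c = (Real.sqrt 15 + Real.sqrt 3) / 6)
    (he : e = (Real.sqrt 15 + Real.sqrt 3) / 4)
    (hf : f = Real.sqrt 3)
    (hg : g = (3 * Real.sqrt 15 - Real.sqrt 3) / 4)
    (hW0 : W0 = Real.pi ^ 2 / 12)
    (hW1 : W1 = 9 * Real.pi ^ 2 / 100)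
    (hW2 : W2 = Real.pi ^ 2 / 300)
    :
    ∀ q : MvPolynomial (Fin 4) ℝ, q.totalDegree ≤ 4 →
      W0 * (MvPolynomial.eval ![0, 0, 0, 0] q)
        + W1 * (MvPolynomial.eval ![-b, -b, c, c] q
          + MvPolynomial.eval ![-b, c, -b, c] q
          + MvPolynomial.eval ![-b, c, c, -b] q
          + MvPolynomial.eval ![c, -b, -b, c] q
          + MvPolynomial.eval ![c, -b, c, -b] q
          + MvPolynomial.eval ![c, c, -b, -b] q
          + MvPolynomial.eval ![-a, -a, -a, -e] q
          + MvPolynomial.eval ![-a, -a, -e, -a] q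
          + MvPolynomial.eval ![-a, -e, -a, -a] q
          + MvPolynomial.eval ![-e, -a, -a, -a] q)
        + W2 * (MvPolynomial.eval ![f, f, f, f] q
          + MvPolynomial.eval ![-e, -e, -e, g] q
          + MvPolynomial.eval ![-e, -e, g, -e] q
          + MvPolynomial.eval ![-e, g, -e, -e] q
          + MvPolynomial.eval ![g, -e, -e, -e] q)
        = ∫ x : Fin 4 → ℝ, Real.exp (-(∑ t, x t ^ 2)) * MvPolynomial.eval x q := by
  intro q hq
  have h15 : √(15 : ℝ) = √3 * √5 := by
    rw [← Real.sqrt_mul (by norm_num)]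
    norm_num
  rw [h15] at ha hb hc he hg
  have hint : ∫ x : Fin 4 → ℝ, Real.exp (-(∑ t, x t ^ 2)) * MvPolynomial.eval x q
      = ∑ d ∈ q.support, q.coeff d * (Real.pi ^ 2 * (normMoment (d 0) * normMoment (d 1)
          * normMoment (d 2) * normMoment (d 3))) := by
    simp_rw [MvPolynomial.eval_eq', Finset.mul_sum, mul_left_comm (Real.exp _)]
    rw [integral_finsetSum _ fun (d : Fin 4 →₀ ℕ) _ =>
      (integrable_gaussian_mul_monomial d).const_mul (q.coeff d)]
    refine Finset.sum_congr rfl fun d hd => ?_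
    rw [integral_const_mul, integral_gaussian_mul_monomial d]
    intro i
    exact (Finsupp.le_degree i d).trans ((MvPolynomial.le_totalDegree hd).trans hq)
  rw [hint]
  simp only [MvPolynomial.eval_eq', Finset.mul_sum, ← Finset.sum_add_distrib]
  refine Finset.sum_congr rfl fun d hd => ?_
  have hdeg : d 0 + d 1 + d 2 + d 3 ≤ 4 := by
    have h := (MvPolynomial.le_totalDegree hd).trans hq
    rwa [Finsupp.sum_fintype _ _ (fun _ => rfl), Fin.sum_univ_four] at h
  have key := rule_monomial (√3) (√5) a b c e g (Real.sq_sqrt (by norm_num))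
    (Real.sq_sqrt (by norm_num)) ha hb hc he hg _ _ _ _ hdeg
  simp only [Fin.prod_univ_four, Matrix.cons_val]
  rw [hW0, hW1, hW2, hf, ← key]
  ring
end

section
/- Set a = (3√42−√210)/12, b = (√210−√42)/6, c = (√210+√42)/6, e = (√210+√42)/4, f = √42, g = (3√210−√42)/4, and weights W₀ = 29π²/7, W₁ = 27π²/35, W₂ = π²/35. Consider the 16 nodes in ℝ⁴: the origin with weight W₀; the 6 distinct coordinate permutations of (c,c,−b,−b), each with weight W₁; the 4 distinct coordinate permutations of (−e,−a,−a,−a), each with weight W₁; the point (f,f,f,f) with weight W₂; and the 4 distinct coordinate permutations of (g,−e,−e,−e), each with weight W₂. Then Σ W_i p(x_i) = ∫_{ℝ⁴} e^{−‖x‖} p(x) dx for every real polynomial p in 4 variables of total degree at most 4. -/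
open MeasureTheory

/-!
It suffices to treat a monomial `x ^ d` of total degree `k ≤ 4`.

In polar coordinates the integral of `h ‖x‖ * P x`, with `P` homogeneous of degree `k`, is the
spherical integral of `P` times a one-dimensional integral depending only on `h` and `k`
(`integral_radial_mul_homogeneous`). Using this for `h r = exp (-r)` and for `h r = exp (-r ^ 2)`
expresses the moment of `exp (-‖x‖)` as an explicit multiple `radialRatio k` of the corresponding
Gaussian moment, which factors over the coordinates (`integral_monomial`).

On the other side, `√210 = √42 * √5`, so every node is `√42` times a vector over `ℚ(√5)`, and the
weighted sums of the monomials over the nodes reduce to arithmetic with `√42 ^ 2 = 42` and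
`√5 ^ 2 = 5` (`nodeSum_monomial`).
-/

/-- The `m`-th moment of the weight `exp (-x ^ 2)` on the real line. -/
noncomputable def gaussMoment (m : ℕ) : ℝ := ∫ x : ℝ, x ^ m * Real.exp (-x ^ 2)

/-- The quotient of `∫ r ^ (k + 3) * exp (-r)` by `∫ r ^ (k + 3) * exp (-r ^ 2)` over `r > 0`:
the factor between the degree `k` moments of `exp (-‖x‖)` and of `exp (-‖x‖ ^ 2)` on `ℝ⁴`. -/
noncomputable def radialRatio (k : ℕ) : ℝ := 2 * (k + 3).factorial / Real.Gamma ((k + 4) / 2)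

/-- The value of the cubature rule on a function `F`. -/
def nodeSum (W0 W1 W2 a b c e f g : ℝ) (F : (Fin 4 → ℝ) → ℝ) : ℝ :=
  W0 * F ![0, 0, 0, 0]
    + W1 * (F ![-b, -b, c, c] + F ![-b, c, -b, c] + F ![-b, c, c, -b]
      + F ![c, -b, -b, c] + F ![c, -b, c, -b] + F ![c, c, -b, -b]
      + F ![-a, -a, -a, -e] + F ![-a, -a, -e, -a]
      + F ![-a, -e, -a, -a] + F ![-e, -a, -a, -a])
    + W2 * (F ![f, f, f, f] + F ![-e, -e, -e, g] + F ![-e, -e, g, -e]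
      + F ![-e, g, -e, -e] + F ![g, -e, -e, -e])

theorem integral_rpow_nat (k : ℕ) {p : ℝ} (hp : 0 < p) :
    ∫ y in Set.Ioi (0 : ℝ), y ^ k * Real.exp (-y ^ p) = 1 / p * Real.Gamma ((k + 1) / p) := by
  rw [← integral_rpow_mul_exp_neg_rpow hp (by have : (0:ℝ) ≤ k := k.cast_nonneg
                                              linarith)]
  simp only [Real.rpow_natCast]

theorem gaussMoment_odd_s7 {m : ℕ} (hm : Odd m) : gaussMoment m = 0 := by
  have h := integral_neg_eq_self (fun x : ℝ => x ^ m * Real.exp (-x ^ 2)) volume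
  simp only [hm.neg_pow, neg_mul, even_two.neg_pow, integral_neg] at h
  unfold gaussMoment
  linarith

theorem gaussMoment_even_s7 {m : ℕ} (hm : Even m) :
    gaussMoment m = Real.Gamma ((m + 1) / 2) := by
  have h := integral_rpow_nat m (p := 2) two_pos
  have h2 := integral_comp_abs (f := fun x : ℝ => x ^ m * Real.exp (-x ^ 2))
  simp only [hm.pow_abs, sq_abs] at h2
  simp only [Real.rpow_two] at h
  rw [gaussMoment, h2, h]
  ring

theorem gaussMoment_zero : gaussMoment 0 = √Real.pi := by
  rw [gaussMoment_even_s7 (by decide), ← Real.Gamma_one_half_eq]; simp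

theorem gaussMoment_two : gaussMoment 2 = √Real.pi / 2 := by
  rw [gaussMoment_even_s7 (by decide)]
  have := Real.Gamma_nat_add_half 1
  norm_num at this ⊢
  exact this

theorem gaussMoment_four : gaussMoment 4 = 3 * √Real.pi / 4 := by
  rw [gaussMoment_even_s7 (by decide)]
  have := Real.Gamma_nat_add_half 2
  norm_num [Nat.doubleFactorial] at this ⊢
  exact this

theorem radialRatio_zero : radialRatio 0 = 12 := by
  norm_num [radialRatio, Nat.factorial]

theorem radialRatio_two : radialRatio 2 = 120 := by
  have := Real.Gamma_nat_eq_factorial 2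
  norm_num [radialRatio, Nat.factorial] at this ⊢

theorem radialRatio_four : radialRatio 4 = 1680 := by
  have := Real.Gamma_nat_eq_factorial 3
  norm_num [radialRatio, Nat.factorial] at this ⊢

/-- Polar coordinates separate a radial factor from a homogeneous one. No integrability is needed,
since the integral of a product of functions of separate variables always factors. -/
theorem integral_radial_mul_homogeneous {E : Type*} [NormedAddCommGroup E] [NormedSpace ℝ E]
    [Nontrivial E] [FiniteDimensional ℝ E] [MeasurableSpace E] [BorelSpace E]
    (μ : Measure E) [μ.IsAddHaarMeasure] (h : ℝ → ℝ) (P : E → ℝ) (k : ℕ)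
    (hP : ∀ (r : ℝ) (x : E), P (r • x) = r ^ k * P x) :
    ∫ x, h ‖x‖ * P x ∂μ = (∫ x : Metric.sphere (0 : E) 1, P x ∂μ.toSphere) *
      ∫ y in Set.Ioi (0 : ℝ), y ^ (Module.finrank ℝ E - 1) * (y ^ k * h y) := by
  calc
    ∫ x, h ‖x‖ * P x ∂μ
        = ∫ x : ({(0)}ᶜ : Set E), h ‖x.1‖ * P x.1 ∂(μ.comap (↑)) := by
      rw [integral_subtype_comap (measurableSet_singleton _).compl fun x ↦ h (‖x‖) * P x,
        restrict_compl_singleton]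
    _ = ∫ z, P z.1 * ((z.2 : ℝ) ^ k * h z.2)
          ∂μ.toSphere.prod (.volumeIoiPow (Module.finrank ℝ E - 1)) := by
      rw [← μ.measurePreserving_homeomorphUnitSphereProd.integral_comp
        (Homeomorph.measurableEmbedding _)]
      refine integral_congr_ae (.of_forall fun x => ?_)
      have hx : ‖x.1‖ ≠ 0 := norm_ne_zero_iff.2 x.2
      have := hP ‖x.1‖ (‖x.1‖⁻¹ • x.1)
      rw [smul_inv_smul₀ hx] at this
      simp only [homeomorphUnitSphereProd_apply_snd_coe, homeomorphUnitSphereProd_apply_fst_coe]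
      rw [this]
      ring
    _ = (∫ x : Metric.sphere (0 : E) 1, P x ∂μ.toSphere) *
          ∫ y : Set.Ioi (0 : ℝ), (y : ℝ) ^ k * h y
            ∂.volumeIoiPow (Module.finrank ℝ E - 1) :=
      integral_prod_mul (fun x : Metric.sphere (0 : E) 1 => P x)
        (fun y : Set.Ioi (0 : ℝ) => (y : ℝ) ^ k * h y)
    _ = _ := by
      congr 1
      simp only [Measure.volumeIoiPow, ENNReal.ofReal]
      rw [integral_withDensity_eq_integral_smul,
        integral_subtype_comap measurableSet_Ioi
          fun a ↦ Real.toNNReal (a ^ (Module.finrank ℝ E - 1)) • (a ^ k * h a),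
        setIntegral_congr_fun measurableSet_Ioi fun x hx ↦ ?_]
      · rw [NNReal.smul_def, Real.coe_toNNReal _ (pow_nonneg hx.out.le _), smul_eq_mul]
      · exact (measurable_subtype_coe.pow_const _).real_toNNReal

/-- Transfer from `EuclideanSpace`, where the norm is Euclidean, to the plain function space. -/
theorem integral_euclidean (F : ℝ → ℝ) (P : (Fin 4 → ℝ) → ℝ) :
    ∫ x : EuclideanSpace ℝ (Fin 4), F ‖x‖ * P x.ofLp
      = ∫ x : Fin 4 → ℝ, F (√(∑ t, x t ^ 2)) * P x := by
  rw [← (EuclideanSpace.volume_preserving_symm_measurableEquiv_toLp (Fin 4)).integral_comp']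
  simp only [EuclideanSpace.norm_eq, Real.norm_eq_abs, sq_abs]
  rfl

theorem integral_gaussian_monomial (d : Fin 4 → ℕ) :
    ∫ x : Fin 4 → ℝ, Real.exp (-√(∑ t, x t ^ 2) ^ 2) * ∏ i, x i ^ d i
      = ∏ i, gaussMoment (d i) := by
  unfold gaussMoment
  rw [← integral_fintype_prod_volume_eq_prod]
  congr 1 with x
  rw [Real.sq_sqrt (Finset.sum_nonneg fun _ _ => sq_nonneg _), Finset.prod_mul_distrib,
    ← Real.exp_sum, Finset.sum_neg_distrib, mul_comm]

theorem integral_monomial (d : Fin 4 → ℕ) :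
    ∫ x : Fin 4 → ℝ, Real.exp (-√(∑ t, x t ^ 2)) * ∏ i, x i ^ d i
      = radialRatio (∑ i, d i) * ∏ i, gaussMoment (d i) := by
  have hP : ∀ (r : ℝ) (x : EuclideanSpace ℝ (Fin 4)),
      ∏ i, (r • x).ofLp i ^ d i = r ^ (∑ i, d i) * ∏ i, x.ofLp i ^ d i := fun r x => by
    simp [mul_pow, Finset.prod_mul_distrib, Finset.prod_pow_eq_pow_sum]
  have h1 := integral_radial_mul_homogeneous volume (fun r => Real.exp (-r))
    (fun x : EuclideanSpace ℝ (Fin 4) => ∏ i, x.ofLp i ^ d i) _ hP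
  have h2 := integral_radial_mul_homogeneous volume (fun r => Real.exp (-r ^ 2))
    (fun x : EuclideanSpace ℝ (Fin 4) => ∏ i, x.ofLp i ^ d i) _ hP
  rw [integral_euclidean (fun r => Real.exp (-r)) fun x => ∏ i, x i ^ d i] at h1
  rw [integral_euclidean (fun r => Real.exp (-r ^ 2)) fun x => ∏ i, x i ^ d i,
    integral_gaussian_monomial] at h2
  generalize ∑ i, d i = k at *
  have r1 := integral_rpow_nat (k + 3) (p := 1) one_pos
  have r2 := integral_rpow_nat (k + 3) (p := 2) two_pos
  simp only [finrank_euclideanSpace, Fintype.card_fin, Nat.add_one_sub_one, ← mul_assoc,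
    ← pow_add, Nat.add_comm 3] at h1 h2
  simp only [Real.rpow_one, Real.rpow_two, div_one, Real.Gamma_nat_eq_factorial] at r1 r2
  have hpos : 0 < Real.Gamma (((k : ℝ) + 4) / 2) := Real.Gamma_pos_of_pos (by positivity)
  rw [h1, h2, r1, r2, radialRatio,
    show ((k + 3 : ℕ) : ℝ) + 1 = k + 4 by push_cast; ring]
  field_simp

theorem integrable_monomial (d : Fin 4 → ℕ) :
    Integrable fun x : Fin 4 → ℝ => Real.exp (-√(∑ t, x t ^ 2)) * ∏ i, x i ^ d i := by
  rw [← (EuclideanSpace.volume_preserving_symm_measurableEquiv_toLp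
    (Fin 4)).integrable_comp_emb (MeasurableEquiv.measurableEmbedding _)]
  have hrad : Integrable fun x : EuclideanSpace ℝ (Fin 4) =>
      Real.exp (-‖x‖) * ‖x‖ ^ (∑ i, d i) := by
    refine (integrable_fun_norm_addHaar volume
      (f := fun r => Real.exp (-r) * r ^ (∑ i, d i))).2 ?_
    have := Real.GammaIntegral_convergent (s := ((∑ i, d i) + 3 : ℕ) + 1) (by positivity)
    refine this.congr_fun (fun y _ => ?_) measurableSet_Ioi
    simp only [add_sub_cancel_right, Real.rpow_natCast, finrank_euclideanSpace,
      Fintype.card_fin, smul_eq_mul]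
    ring
  change Integrable fun x : EuclideanSpace ℝ (Fin 4) =>
    Real.exp (-√(∑ t, x.ofLp t ^ 2)) * ∏ i, x.ofLp i ^ d i
  refine hrad.mono' (Continuous.aestronglyMeasurable (by fun_prop)) (.of_forall fun x => ?_)
  have hn : √(∑ t, x.ofLp t ^ 2) = ‖x‖ := by
    simp only [EuclideanSpace.norm_eq, Real.norm_eq_abs, sq_abs]
  rw [hn, norm_mul, Real.norm_of_nonneg (Real.exp_pos _).le, norm_prod,
    ← Finset.prod_pow_eq_pow_sum]
  gcongr with i _
  rw [norm_pow]
  gcongr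
  exact PiLp.norm_apply_le x i

theorem nodeSum_sum {ι : Type*} (S : Finset ι) (C : ι → ℝ) (F : ι → (Fin 4 → ℝ) → ℝ)
    (W0 W1 W2 a b c e f g : ℝ) :
    nodeSum W0 W1 W2 a b c e f g (fun x => ∑ i ∈ S, C i * F i x)
      = ∑ i ∈ S, C i * nodeSum W0 W1 W2 a b c e f g (F i) := by
  simp only [nodeSum, Finset.mul_sum, ← Finset.sum_add_distrib]
  exact Finset.sum_congr rfl fun i _ => by ring

/-- The rule evaluated on monomials of degree at most `4`. Here `u`, `v`, `s` stand for `√42`, `√5`,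
`√π`, and `rf`, `gm` for `radialRatio`, `gaussMoment`; `rf` at odd degree is irrelevant, because
then some exponent is odd and the product of the moments vanishes. -/
theorem nodeSum_monomial (rf gm : ℕ → ℝ) (u v s : ℝ) (hu : u ^ 2 = 42) (hv : v ^ 2 = 5)
    (hr0 : rf 0 = 12) (hr2 : rf 2 = 120) (hr4 : rf 4 = 1680)
    (h0 : gm 0 = s) (h1 : gm 1 = 0) (h2 : gm 2 = s / 2) (h3 : gm 3 = 0) (h4 : gm 4 = 3 * s / 4)
    (d : Fin 4 → ℕ) (hd : ∑ i, d i ≤ 4) :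
    nodeSum (29 * s ^ 4 / 7) (27 * s ^ 4 / 35) (s ^ 4 / 35)
      ((3 * u - u * v) / 12) ((u * v - u) / 6) ((u * v + u) / 6)
      ((u * v + u) / 4) u ((3 * (u * v) - u) / 4) (fun x => ∏ i, x i ^ d i) =
    rf (∑ i, d i) * ∏ i, gm (d i) := by
  have hu4 : u ^ 4 = 42 ^ 2 := by rw [← hu]; ring
  have hv4 : v ^ 4 = 25 := by rw [show v ^ 4 = (v ^ 2) ^ 2 by ring, hv]; norm_num
  simp only [nodeSum, Fin.prod_univ_four, Fin.sum_univ_four, Matrix.cons_val] at hd ⊢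
  generalize d 0 = i at *
  generalize d 1 = j at *
  generalize d 2 = k at *
  generalize d 3 = l at *
  have hi : i ≤ 4 := by omega
  have hj : j ≤ 4 := by omega
  have hk : k ≤ 4 := by omega
  have hl : l ≤ 4 := by omega
  interval_cases i <;> interval_cases j <;> try omega
  all_goals interval_cases k <;> try omega
  all_goals interval_cases l <;> try omega
  all_goals
    simp only [Nat.reduceAdd, hr0, hr2, hr4, h0, h1, h2, h3, h4]
    ring_nf
    try simp only [hu, hu4, hv, hv4]
    try ring_nf

/-- 16 point rule of degree 4 for `E_4^r` (group 1). -/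
theorem stmt_7 (a b c e f g W0 W1 W2 : ℝ)
    (ha : a = (3 * Real.sqrt 42 - Real.sqrt 210) / 12)
    (hb : b = (Real.sqrt 210 - Real.sqrt 42) / 6)
    (hc : c = (Real.sqrt 210 + Real.sqrt 42) / 6)
    (he : e = (Real.sqrt 210 + Real.sqrt 42) / 4)
    (hf : f = Real.sqrt 42)
    (hg : g = (3 * Real.sqrt 210 - Real.sqrt 42) / 4)
    (hW0 : W0 = 29 * Real.pi ^ 2 / 7)
    (hW1 : W1 = 27 * Real.pi ^ 2 / 35)
    (hW2 : W2 = Real.pi ^ 2 / 35)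
    :
    ∀ q : MvPolynomial (Fin 4) ℝ, q.totalDegree ≤ 4 →
      W0 * (MvPolynomial.eval ![0, 0, 0, 0] q)
        + W1 * (MvPolynomial.eval ![-b, -b, c, c] q
          + MvPolynomial.eval ![-b, c, -b, c] q
          + MvPolynomial.eval ![-b, c, c, -b] q
          + MvPolynomial.eval ![c, -b, -b, c] q
          + MvPolynomial.eval ![c, -b, c, -b] q
          + MvPolynomial.eval ![c, c, -b, -b] q
          + MvPolynomial.eval ![-a, -a, -a, -e] q
          + MvPolynomial.eval ![-a, -a, -e, -a] q
          + MvPolynomial.eval ![-a, -e, -a, -a] q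
          + MvPolynomial.eval ![-e, -a, -a, -a] q)
        + W2 * (MvPolynomial.eval ![f, f, f, f] q
          + MvPolynomial.eval ![-e, -e, -e, g] q
          + MvPolynomial.eval ![-e, -e, g, -e] q
          + MvPolynomial.eval ![-e, g, -e, -e] q
          + MvPolynomial.eval ![g, -e, -e, -e] q)
        = ∫ x : Fin 4 → ℝ, Real.exp (-Real.sqrt (∑ t, x t ^ 2)) * MvPolynomial.eval x q := by
  intro q hq
  have hmono : ∀ d ∈ q.support, ∑ i, d i ≤ 4 := fun d hd => by
    have := MvPolynomial.le_totalDegree hd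
    rw [Finsupp.sum_fintype _ _ fun _ => rfl] at this
    exact this.trans hq
  have h210 : √210 = √42 * √5 := by
    rw [← Real.sqrt_mul (by norm_num)]
    norm_num
  have hpi : Real.pi ^ 2 = √Real.pi ^ 4 := by
    rw [show √Real.pi ^ 4 = (√Real.pi ^ 2) ^ 2 by ring, Real.sq_sqrt Real.pi_pos.le]
  rw [h210] at ha hb hc he hg
  rw [hpi] at hW0 hW1 hW2
  change nodeSum W0 W1 W2 a b c e f g (fun x => MvPolynomial.eval x q) = _
  simp only [MvPolynomial.eval_eq', Finset.mul_sum, mul_left_comm (Real.exp _)]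
  rw [nodeSum_sum, integral_finsetSum _ fun (d : Fin 4 →₀ ℕ) _ =>
    (integrable_monomial d).const_mul (q.coeff d)]
  refine Finset.sum_congr rfl fun d hd => ?_
  rw [integral_const_mul, integral_monomial]
  subst ha hb hc he hf hg hW0 hW1 hW2
  rw [nodeSum_monomial radialRatio gaussMoment (√42) (√5) (√Real.pi) (by norm_num) (by norm_num)
    radialRatio_zero radialRatio_two radialRatio_four gaussMoment_zero
    (gaussMoment_odd_s7 (by decide)) gaussMoment_two (gaussMoment_odd_s7 (by decide)) gaussMoment_four
    d (hmono d hd)]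
end

section
/- Set a = (3√3−√15)/24, b = (√15−√3)/12, c = (√15+√3)/12, e = (√15+√3)/8, f = √3/2, g = (3√15−√3)/8, and weights W₀ = −π²/9, W₁ = 3π²/50, W₂ = π²/450. Consider the 16 nodes in ℝ⁴: the origin with weight W₀; the 6 distinct coordinate permutations of (c,c,−b,−b), each with weight W₁; the 4 distinct coordinate permutations of (−e,−a,−a,−a), each with weight W₁; the point (f,f,f,f) with weight W₂; and the 4 distinct coordinate permutations of (g,−e,−e,−e), each with weight W₂. Then Σ W_i p(x_i) = ∫_{‖x‖≤1} p(x) dx for every real polynomial p in 4 variables of total degree at most 4. -/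
/-!
By linearity both sides only have to be compared on the monomials of degree at most 4.

Moments of the ball: Lebesgue measure on the ball is invariant under orthogonal matrices
(`integral_orthogonal`). Sign changes kill every monomial with an odd exponent, and permutations
of the coordinates leave three unknown moments besides the volume: those of `x₀²`, `x₀⁴` and
`x₀² x₁²`. A rotation mixing two coordinates gives the relation `∫ x₀⁴ = 3 ∫ x₀² x₁²`
(`integral_pow_four'`), and the radial integrals `∫ ‖x‖ ^ (2 k) = 2 π² / (2 k + 4)`
(`integral_radial`), obtained in polar coordinates, determine the rest: the volume is `π² / 2` and
the moments are `π² / 12`, `π² / 32` and `π² / 96`.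

Moments of the rule: with `√15 = √3 √5` all nodes are polynomial in `s = √3` and `t = √5`, so each
of the 70 moment equations is a polynomial identity modulo `s² = 3`, `t² = 5`
(`cubature_monomial`).
-/

open MeasureTheory

/-! ### Integration over the unit ball and its symmetries -/

/-- The closed Euclidean unit ball of `ℝ⁴`, as a subset of `Fin 4 → ℝ` (whose own norm is the
sup norm). -/
def ball4 : Set (Fin 4 → ℝ) := {y | ∑ t, y t ^ 2 ≤ 1}

lemma measurableSet_ball4 : MeasurableSet ball4 :=
  measurableSet_le (by fun_prop) (by fun_prop)

lemma isCompact_ball4 : IsCompact ball4 := by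
  refine Metric.isCompact_of_isClosed_isBounded
    (isClosed_le (by fun_prop) (by fun_prop)) ?_
  refine (Metric.isBounded_closedBall (x := (0 : Fin 4 → ℝ)) (r := 1)).subset fun y hy => ?_
  rw [mem_closedBall_zero_iff, pi_norm_le_iff_of_nonneg zero_le_one]
  intro i
  rw [Real.norm_eq_abs, ← sq_le_one_iff_abs_le_one]
  exact (Finset.single_le_sum (f := fun t => y t ^ 2) (fun t _ => sq_nonneg (y t))
    (Finset.mem_univ i)).trans hy

lemma integrable_ball4 {f : (Fin 4 → ℝ) → ℝ} (hf : Continuous f) : IntegrableOn f ball4 :=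
  hf.continuousOn.integrableOn_compact isCompact_ball4

lemma integral_orthogonal (A : Matrix (Fin 4) (Fin 4) ℝ) (hA : A.transpose * A = 1)
    (f : (Fin 4 → ℝ) → ℝ) :
    ∫ x in ball4, f (A.mulVec x) = ∫ x in ball4, f x := by
  have hdet : A.det * A.det = 1 := by
    have := congrArg Matrix.det hA
    simpa using this
  have habs : |A.det| = 1 := by
    rcases mul_self_eq_one_iff.1 hdet with h | h <;> simp [h]
  have hne : A.det ≠ 0 := by
    intro h; simp [h] at hdet
  have hmp : MeasurePreserving (fun x => A.mulVec x) (volume : Measure (Fin 4 → ℝ)) volume := by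
    refine ⟨by fun_prop, ?_⟩
    have := Real.map_matrix_volume_pi_eq_smul_volume_pi hne
    rw [abs_inv, habs, inv_one, ENNReal.ofReal_one, one_smul] at this
    exact this
  have hinj : Function.Injective (fun x => A.mulVec x) := by
    intro x y hxy
    have := congrArg A.transpose.mulVec hxy
    simpa [Matrix.mulVec_mulVec, hA] using this
  have hemb : MeasurableEmbedding (fun x => A.mulVec x) :=
    (Continuous.measurableEmbedding (by fun_prop) hinj)
  have hpre : (fun x => A.mulVec x) ⁻¹' ball4 = ball4 := by
    ext x
    have : ∑ t, A.mulVec x t ^ 2 = ∑ t, x t ^ 2 := by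
      have h1 : A.mulVec x ⬝ᵥ A.mulVec x = x ⬝ᵥ x := by
        rw [Matrix.dotProduct_mulVec, Matrix.vecMul_mulVec, hA]
        simp
      simpa [dotProduct, sq] using h1
    simp only [ball4, Set.mem_preimage, Set.mem_ofPred_eq, this]
  have := hmp.setIntegral_preimage_emb hemb f ball4
  rwa [hpre] at this

/-! ### Moments of the ball -/

/-- Even powers of the Euclidean norm, integrated in polar coordinates. -/
lemma integral_radial (k : ℕ) :
    ∫ x in ball4, (∑ t, x t ^ 2) ^ k = 2 * Real.pi ^ 2 / (2 * k + 4) := by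
  have h := integral_fun_norm_addHaar (volume : Measure (EuclideanSpace ℝ (Fin 4)))
    ((Set.Iic (1 : ℝ)).indicator fun y => y ^ (2 * k))
  have hvol : (volume : Measure (EuclideanSpace ℝ (Fin 4))).real (Metric.ball 0 1)
      = Real.pi ^ 2 / 2 := by
    rw [measureReal_def, EuclideanSpace.volume_ball]
    have h4 : √Real.pi ^ 4 = Real.pi ^ 2 := by
      rw [show 4 = 2 * 2 by norm_num, pow_mul, Real.sq_sqrt Real.pi_pos.le]
    have hG : Real.Gamma ((4 : ℕ) / 2 + 1) = 2 := by
      rw [show (((4 : ℕ) : ℝ) / 2 + 1) = (2 : ℕ) + 1 by norm_num, Real.Gamma_nat_eq_factorial]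
      simp
    simp only [Fintype.card_fin, hG, h4]
    simp
    positivity
  have hrad : ∫ y in Set.Ioi (0 : ℝ), y ^ (4 - 1) • (Set.Iic (1 : ℝ)).indicator
      (fun y => y ^ (2 * k)) y = 1 / (2 * k + 4) := by
    have h1 : (fun y : ℝ => y ^ (4 - 1) • (Set.Iic (1 : ℝ)).indicator (fun y => y ^ (2 * k)) y)
        = (Set.Iic (1 : ℝ)).indicator (fun y => y ^ (2 * k + 3)) := by
      ext y
      by_cases hy : y ∈ Set.Iic (1 : ℝ)
      · simp only [Set.indicator_of_mem hy, smul_eq_mul]; ring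
      · simp only [Set.indicator_of_notMem hy, smul_zero]
    rw [h1, setIntegral_indicator measurableSet_Iic, Set.Ioi_inter_Iic,
      ← intervalIntegral.integral_of_le zero_le_one, integral_pow]
    push_cast
    simp
    ring
  rw [finrank_euclideanSpace_fin, hvol, hrad] at h
  have hmp := EuclideanSpace.volume_preserving_symm_measurableEquiv_toLp (Fin 4)
  rw [← integral_indicator measurableSet_ball4,
    ← hmp.integral_comp (MeasurableEquiv.measurableEmbedding _)]
  trans ∫ x : EuclideanSpace ℝ (Fin 4), (Set.Iic (1 : ℝ)).indicator (fun y => y ^ (2 * k)) ‖x‖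
  · refine integral_congr_ae (Filter.Eventually.of_forall fun x => ?_)
    have hn : ∑ t, x t ^ 2 = ‖x‖ ^ 2 := by
      rw [EuclideanSpace.norm_sq_eq]; simp
    simp only [Set.indicator_apply, ball4, Set.mem_ofPred_eq, Set.mem_Iic]
    have : ∀ t, ((MeasurableEquiv.toLp 2 (Fin 4 → ℝ)).symm x) t = x t := fun t => rfl
    simp only [this, hn, pow_mul, sq_le_one_iff₀ (norm_nonneg x)]
  · rw [h]
    simp only [smul_eq_mul, nsmul_eq_mul]
    push_cast
    field_simp
    ring

lemma integral_perm (σ : Equiv.Perm (Fin 4)) (f : (Fin 4 → ℝ) → ℝ) :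
    ∫ x in ball4, f (x ∘ σ) = ∫ x in ball4, f x := by
  have := integral_orthogonal (σ.permMatrix ℝ) (by
    rw [Matrix.transpose_permMatrix, ← Matrix.permMatrix_mul]
    simp) f
  simpa only [Matrix.permMatrix_mulVec] using this

/-- A function that changes sign under the reflection `x i ↦ -x i` has integral zero. -/
lemma integral_odd (f : (Fin 4 → ℝ) → ℝ) (i : Fin 4)
    (hf : ∀ x, f (Function.update x i (-x i)) = -f x) :
    ∫ x in ball4, f x = 0 := by
  have h := integral_orthogonal (Matrix.diagonal (Function.update 1 i (-1))) (by
    rw [Matrix.diagonal_transpose, Matrix.diagonal_mul_diagonal, ← Matrix.diagonal_one]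
    congr 1
    ext j
    by_cases hj : j = i
    · subst hj; simp
    · simp [hj]) f
  have hu : ∀ x : Fin 4 → ℝ,
      (Matrix.diagonal (Function.update 1 i (-1))).mulVec x = Function.update x i (-x i) := by
    intro x
    ext j
    rw [Matrix.mulVec_diagonal]
    by_cases hj : j = i
    · subst hj; simp
    · simp [hj]
  simp only [hu, hf, integral_neg] at h
  linarith

lemma integral_sq (i : Fin 4) : ∫ x in ball4, x i ^ 2 = Real.pi ^ 2 / 12 := by
  have hsym : ∀ j, ∫ x in ball4, x j ^ 2 = ∫ x in ball4, x i ^ 2 := fun j => by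
    simpa using integral_perm (Equiv.swap i j) (fun x => x i ^ 2)
  have h := integral_radial 1
  simp only [pow_one] at h
  rw [integral_finsetSum _ fun j _ => integrable_ball4 (by fun_prop)] at h
  simp only [hsym, Finset.sum_const, Finset.card_univ, Fintype.card_fin] at h
  norm_num at h
  linarith

/-- All mixed quartic moments agree, by permuting coordinates. -/
lemma integral_sq_mul_sq' {i j : Fin 4} (hij : i ≠ j) :
    ∫ x in ball4, x i ^ 2 * x j ^ 2 = ∫ x in ball4, x 0 ^ 2 * x 1 ^ 2 := by
  obtain ⟨σ, h0, h1⟩ : ∃ σ : Equiv.Perm (Fin 4), σ 0 = i ∧ σ 1 = j := by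
    revert i j; decide
  simpa [h0, h1] using integral_perm σ (fun x => x 0 ^ 2 * x 1 ^ 2)

/-- Comparison of the two kinds of quartic moments, from invariance of `∫ x₀² x₁²` under an
orthogonal map mixing the first two coordinates. -/
lemma integral_pow_four' (i : Fin 4) :
    ∫ x in ball4, x i ^ 4 = 3 * ∫ x in ball4, x 0 ^ 2 * x 1 ^ 2 := by
  have hsym : ∀ j, ∫ x in ball4, x j ^ 4 = ∫ x in ball4, x i ^ 4 := fun j => by
    simpa using integral_perm (Equiv.swap i j) (fun x => x i ^ 4)
  -- The Pythagorean triple (3, 4, 5) keeps the entries of the orthogonal matrix rational.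
  have h := integral_orthogonal
    !![3/5, 4/5, 0, 0; 4/5, -3/5, 0, 0; 0, 0, 1, 0; 0, 0, 0, 1] (by
      ext p q
      fin_cases p <;> fin_cases q <;>
        simp [Matrix.mul_apply, Fin.sum_univ_four] <;> norm_num) (fun x => x 0 ^ 2 * x 1 ^ 2)
  have hexp : ∀ x : Fin 4 → ℝ,
      (Matrix.mulVec !![3/5, 4/5, 0, 0; 4/5, -3/5, 0, 0; 0, 0, 1, 0; 0, 0, 0, 1] x 0) ^ 2 *
      (Matrix.mulVec !![3/5, 4/5, 0, 0; 4/5, -3/5, 0, 0; 0, 0, 1, 0; 0, 0, 0, 1] x 1) ^ 2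
      = 144 / 625 * x 0 ^ 4 + 144 / 625 * x 1 ^ 4 + (-239 / 625) * (x 0 ^ 2 * x 1 ^ 2)
        + 168 / 625 * (x 0 ^ 3 * x 1 - x 0 * x 1 ^ 3) := by
    intro x
    simp [Matrix.mulVec, dotProduct, Fin.sum_univ_four]
    ring
  have hodd : ∫ x in ball4, (x 0 ^ 3 * x 1 - x 0 * x 1 ^ 3) = 0 :=
    integral_odd _ 0 fun x => by simp; ring
  simp only [hexp] at h
  rw [integral_add (integrable_ball4 (by fun_prop)) (integrable_ball4 (by fun_prop)),
    integral_add (integrable_ball4 (by fun_prop)) (integrable_ball4 (by fun_prop)),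
    integral_add (integrable_ball4 (by fun_prop)) (integrable_ball4 (by fun_prop)),
    integral_const_mul, integral_const_mul, integral_const_mul, integral_const_mul,
    hsym 0, hsym 1, hodd] at h
  linarith

lemma integral_sq_mul_sq_zero_one :
    ∫ x in ball4, x 0 ^ 2 * x 1 ^ 2 = Real.pi ^ 2 / 96 := by
  have h := integral_radial 2
  simp only [sq (∑ t, _), Finset.sum_mul_sum] at h
  rw [integral_finsetSum _ fun j _ => integrable_ball4 (by fun_prop)] at h
  have hin : ∀ i : Fin 4, ∫ x in ball4, ∑ j, x i ^ 2 * x j ^ 2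
      = 6 * ∫ x in ball4, x 0 ^ 2 * x 1 ^ 2 := by
    intro i
    rw [integral_finsetSum _ fun j _ => integrable_ball4 (by fun_prop),
      ← Finset.add_sum_erase _ _ (Finset.mem_univ i),
      Finset.sum_congr rfl fun j hj => integral_sq_mul_sq' (Finset.ne_of_mem_erase hj).symm]
    -- Three mixed moments plus a pure one, which counts three times.
    have : ∀ x : Fin 4 → ℝ, x i ^ 2 * x i ^ 2 = x i ^ 4 := fun x => by ring
    simp only [this, integral_pow_four']
    simp
    ring
  simp only [hin, Finset.sum_const, Finset.card_univ, Fintype.card_fin] at h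
  norm_num at h
  linarith

lemma integral_sq_mul_sq {i j : Fin 4} (hij : i ≠ j) :
    ∫ x in ball4, x i ^ 2 * x j ^ 2 = Real.pi ^ 2 / 96 := by
  rw [integral_sq_mul_sq' hij, integral_sq_mul_sq_zero_one]

lemma integral_pow_four (i : Fin 4) : ∫ x in ball4, x i ^ 4 = Real.pi ^ 2 / 32 := by
  rw [integral_pow_four', integral_sq_mul_sq_zero_one]; ring

lemma integral_monomial_odd (k : Fin 4 → ℕ) (i : Fin 4) (hi : Odd (k i)) :
    ∫ x in ball4, ∏ t, x t ^ k t = 0 := by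
  refine integral_odd _ i fun x => ?_
  rw [← Finset.mul_prod_erase _ _ (Finset.mem_univ i),
    ← Finset.mul_prod_erase _ (fun t => x t ^ k t) (Finset.mem_univ i), Function.update_self,
    hi.neg_pow, neg_mul]
  congr 2
  refine Finset.prod_congr rfl fun t ht => ?_
  rw [Function.update_of_ne (Finset.ne_of_mem_erase ht)]

/-- The value of `∫ ∏ x i ^ k i` over the ball, for exponents of total degree at most 4. In other
degrees the even case is a meaningless default. -/
noncomputable def ballMoment (k : Fin 4 → ℕ) : ℝ :=
  if ∃ i, Odd (k i) then 0
  else if ∑ i, k i = 0 then Real.pi ^ 2 / 2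
  else if ∑ i, k i = 2 then Real.pi ^ 2 / 12
  else if ∃ i, k i = 4 then Real.pi ^ 2 / 32
  else Real.pi ^ 2 / 96

lemma exists_fin_four {P : Fin 4 → Prop} : (∃ i, P i) ↔ P 0 ∨ P 1 ∨ P 2 ∨ P 3 := by
  simp [Fin.exists_fin_succ]

lemma integral_monomial_s8 (k : Fin 4 → ℕ) (hk : ∑ i, k i ≤ 4) :
    ∫ x in ball4, ∏ t, x t ^ k t = ballMoment k := by
  by_cases hodd : ∃ i, Odd (k i)
  · obtain ⟨i, hi⟩ := hodd
    rw [integral_monomial_odd k i hi, ballMoment, if_pos ⟨i, hi⟩]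
  · have hvol : ∫ _ in ball4, (1 : ℝ) = Real.pi ^ 2 / 2 := by
      have := integral_radial 0
      norm_num at this ⊢
      linarith
    have he : ∀ i, ∃ r, k i = 2 * r := by
      intro i
      by_contra hcon
      refine hodd ⟨i, Nat.not_even_iff_odd.1 fun ⟨r, hr⟩ => hcon ⟨r, by omega⟩⟩
    rw [ballMoment, if_neg hodd]
    obtain ⟨r0, h0⟩ := he 0
    obtain ⟨r1, h1⟩ := he 1
    obtain ⟨r2, h2⟩ := he 2
    obtain ⟨r3, h3⟩ := he 3
    simp only [Fin.sum_univ_four, Fin.prod_univ_four, exists_fin_four, h0, h1, h2, h3] at hk ⊢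
    have b0 : r0 ≤ 2 := by omega
    have b1 : r1 ≤ 2 := by omega
    have b2 : r2 ≤ 2 := by omega
    have b3 : r3 ≤ 2 := by omega
    clear h0 h1 h2 h3 he hodd
    interval_cases r0 <;> interval_cases r1 <;> interval_cases r2 <;> interval_cases r3 <;>
      first
      | omega
      | simp [hvol, integral_sq, integral_pow_four, integral_sq_mul_sq]

/-! ### The cubature rule -/

/-- The 16-point rule applied to `F`, with the nodes written in terms of `s = √3` and `t = √5`. -/
noncomputable def cubature (s t : ℝ) (F : (Fin 4 → ℝ) → ℝ) : ℝ :=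
  let a := s * (3 - t) / 24
  let b := s * (t - 1) / 12
  let c := s * (t + 1) / 12
  let e := s * (t + 1) / 8
  let f := s / 2
  let g := s * (3 * t - 1) / 8
  let W0 := -Real.pi ^ 2 / 9
  let W1 := 3 * Real.pi ^ 2 / 50
  let W2 := Real.pi ^ 2 / 450
  W0 * F ![0, 0, 0, 0]
    + W1 * (F ![-b, -b, c, c] + F ![-b, c, -b, c] + F ![-b, c, c, -b]
      + F ![c, -b, -b, c] + F ![c, -b, c, -b] + F ![c, c, -b, -b]
      + F ![-a, -a, -a, -e] + F ![-a, -a, -e, -a] + F ![-a, -e, -a, -a] + F ![-e, -a, -a, -a])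
    + W2 * (F ![f, f, f, f] + F ![-e, -e, -e, g] + F ![-e, -e, g, -e]
      + F ![-e, g, -e, -e] + F ![g, -e, -e, -e])

set_option maxHeartbeats 4000000 in
lemma cubature_monomial_s8 {s t : ℝ} (hs : s ^ 2 = 3) (ht : t ^ 2 = 5)
    (k : Fin 4 → ℕ) (hk : ∑ i, k i ≤ 4) :
    cubature s t (fun x => ∏ i, x i ^ k i) = ballMoment k := by
  have hs4 : s ^ 4 = 9 := by rw [show 4 = 2 * 2 by norm_num, pow_mul, hs]; norm_num
  have ht4 : t ^ 4 = 25 := by rw [show 4 = 2 * 2 by norm_num, pow_mul, ht]; norm_num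
  simp only [cubature, ballMoment, Fin.sum_univ_four, Fin.prod_univ_four,
    exists_fin_four] at hk ⊢
  generalize k 0 = k0 at *
  generalize k 1 = k1 at *
  generalize k 2 = k2 at *
  generalize k 3 = k3 at *
  simp only [Matrix.cons_val]
  have b0 : k0 ≤ 4 := by omega
  interval_cases k0 <;>
  · have b1 : k1 ≤ 4 := by omega
    interval_cases k1 <;> first | omega | skip
    all_goals
      have b2 : k2 ≤ 4 := by omega
      interval_cases k2 <;> first | omega | skip
    all_goals
      have b3 : k3 ≤ 4 := by omega
      interval_cases k3 <;> first | omega | skip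
    all_goals
      norm_num [Nat.odd_iff]
      try ring_nf
      try simp only [hs, ht, hs4, ht4]
      try ring_nf

theorem cubature_exact {s t : ℝ} (hs : s ^ 2 = 3) (ht : t ^ 2 = 5)
    (q : MvPolynomial (Fin 4) ℝ) (hq : q.totalDegree ≤ 4) :
    cubature s t (fun x => MvPolynomial.eval x q) = ∫ x in ball4, MvPolynomial.eval x q := by
  have hI : ∫ x in ball4, MvPolynomial.eval x q
      = ∑ d ∈ q.support, q.coeff d * ∫ x in ball4, ∏ i, x i ^ d i := by
    simp only [MvPolynomial.eval_eq']
    rw [integral_finsetSum _ fun d _ => integrable_ball4 (by fun_prop)]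
    simp only [integral_const_mul]
  have hC : cubature s t (fun x => MvPolynomial.eval x q)
      = ∑ d ∈ q.support, q.coeff d * cubature s t (fun x => ∏ i, x i ^ d i) := by
    simp only [MvPolynomial.eval_eq', cubature, ← Finset.sum_add_distrib, Finset.mul_sum]
    exact Finset.sum_congr rfl fun d _ => by ring
  rw [hI, hC]
  refine Finset.sum_congr rfl fun d hd => ?_
  have hdeg : ∑ i, d i ≤ 4 := by
    have := (MvPolynomial.le_totalDegree hd).trans hq
    rwa [Finsupp.sum_fintype _ _ fun _ => rfl] at this
  rw [cubature_monomial_s8 hs ht _ hdeg, integral_monomial_s8 _ hdeg]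

/-- 16 point rule of degree 4 for `S_4` (group 1). -/
theorem stmt_8 (a b c e f g W0 W1 W2 : ℝ)
    (ha : a = (3 * Real.sqrt 3 - Real.sqrt 15) / 24)
    (hb : b = (Real.sqrt 15 - Real.sqrt 3) / 12)
    (hc : c = (Real.sqrt 15 + Real.sqrt 3) / 12)
    (he : e = (Real.sqrt 15 + Real.sqrt 3) / 8)
    (hf : f = Real.sqrt 3 / 2)
    (hg : g = (3 * Real.sqrt 15 - Real.sqrt 3) / 8)
    (hW0 : W0 = -Real.pi ^ 2 / 9)
    (hW1 : W1 = 3 * Real.pi ^ 2 / 50)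
    (hW2 : W2 = Real.pi ^ 2 / 450)
    :
    ∀ q : MvPolynomial (Fin 4) ℝ, q.totalDegree ≤ 4 →
      W0 * (MvPolynomial.eval ![0, 0, 0, 0] q)
        + W1 * (MvPolynomial.eval ![-b, -b, c, c] q
          + MvPolynomial.eval ![-b, c, -b, c] q
          + MvPolynomial.eval ![-b, c, c, -b] q
          + MvPolynomial.eval ![c, -b, -b, c] q
          + MvPolynomial.eval ![c, -b, c, -b] q
          + MvPolynomial.eval ![c, c, -b, -b] q
          + MvPolynomial.eval ![-a, -a, -a, -e] q
          + MvPolynomial.eval ![-a, -a, -e, -a] q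
          + MvPolynomial.eval ![-a, -e, -a, -a] q
          + MvPolynomial.eval ![-e, -a, -a, -a] q)
        + W2 * (MvPolynomial.eval ![f, f, f, f] q
          + MvPolynomial.eval ![-e, -e, -e, g] q
          + MvPolynomial.eval ![-e, -e, g, -e] q
          + MvPolynomial.eval ![-e, g, -e, -e] q
          + MvPolynomial.eval ![g, -e, -e, -e] q)
        = ∫ x in {y : Fin 4 → ℝ | ∑ t, y t ^ 2 ≤ 1}, MvPolynomial.eval x q := by
  intro q hq
  have h15 : √15 = √3 * √5 := by
    rw [← Real.sqrt_mul (by norm_num)]; norm_num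
  have h := cubature_exact (s := √3) (t := √5) (by norm_num) (by norm_num) q hq
  have ea : √3 * (3 - √5) / 24 = a := by rw [ha, h15]; ring
  have eb : √3 * (√5 - 1) / 12 = b := by rw [hb, h15]; ring
  have ec : √3 * (√5 + 1) / 12 = c := by rw [hc, h15]; ring
  have ee : √3 * (√5 + 1) / 8 = e := by rw [he, h15]; ring
  have eg : √3 * (3 * √5 - 1) / 8 = g := by rw [hg, h15]; ring
  simp only [cubature, ea, eb, ec, ee, eg, ← hf, ← hW0, ← hW1, ← hW2] at h
  exact h
end

section
/- Set a = 1/2, b = √(3/4), c = 1, e = √3, f = 2, and weights W₀ = π³/4, W₁ = π³/36. Consider the 28 nodes in ℝ⁶: the origin with weight W₀, and the following 27 points (all at radius 2), each with weight W₁: the two points (−c,±e,0,0,0,0); the eight points whose first two coordinates are (−c,0) and whose last four coordinates are ±1 times a coordinate permutation of (b,b,b,−b); the two points whose first two coordinates are (a,−b) and whose last four coordinates are (b,b,b,b) or (−b,−b,−b,−b); the six points whose first two coordinates are (a,−b) and whose last four coordinates are a coordinate permutation of (b,b,−b,−b); the point (f,0,0,0,0,0); and the eight points whose first two coordinates are (a,b)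 and which have ±e in exactly one of the last four coordinates and 0 in the others. Then Σ W_i p(x_i) = ∫_{ℝ⁶} e^{−‖x‖²} p(x) dx for every real polynomial p in 6 variables of total degree at most 4. -/
open MeasureTheory

/-!
Both sides are linear in the polynomial, so it suffices to treat monomials `x ^ m` with `|m| ≤ 4`.

*Integral side.* The weight is a product, so the integral factors into one-dimensional Gaussian
moments, and integration by parts gives `∫ exp (-x²) x ^ k = √π · H k / 2 ^ k`, where
`H 0 = 1`, `H 1 = 0`, `H (k + 2) = 2 (k + 1) H k` (`integral_gauss_pow`).

*Node side.* Every node has the form `(y₀ / 2, b y₁, …, b y₅)` with integers `yᵢ` and `b = √3 / 2`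
(note `e = 2 b`). Hence, for a monomial of degree `|m|`, with `k = m₁ + ⋯ + m₅`, the weighted node
sum in units of `W₁` is
`√3 ^ k / 2 ^ |m|` times an integer `S m`, and exactness amounts to `√3 ^ k · S m = 36 ∏ H (mᵢ)`.
Equivalently `3 ^ (k / 2) · S m = 36 ∏ H (mᵢ)` with floor division, since for odd `k` the
right-hand side is zero. This is an identity between integers for each of the 210 exponents of
degree at most 4, and is verified by evaluation (`integer_identity`).
-/

namespace Cubature28

/-! ### One-dimensional Gaussian moments -/

/-- The normalised Gaussian moments `2 ^ k / √π * ∫ exp (-x²) x ^ k`, which are integers. -/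
def H : ℕ → ℤ
  | 0 => 1
  | 1 => 0
  | k + 2 => 2 * (k + 1) * H k

lemma H_odd (k : ℕ) : H (2 * k + 1) = 0 := by
  induction k with
  | zero => rfl
  | succ k ih =>
    rw [show 2 * (k + 1) + 1 = (2 * k + 1) + 2 by ring, H, ih, mul_zero]

lemma integrable_gauss_pow (k : ℕ) :
    Integrable (fun x : ℝ => Real.exp (-x ^ 2) * x ^ k) := by
  have h := integrable_rpow_mul_exp_neg_mul_sq (b := 1) one_pos (s := k)
    (by have : (0 : ℝ) ≤ k := Nat.cast_nonneg k
        linarith)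
  refine h.congr (Filter.Eventually.of_forall fun x => ?_)
  simp [mul_comm]

/-- Integration by parts, with antiderivative `-exp (-x²) / 2` of `x exp (-x²)`. -/
lemma integral_gauss_pow_succ (k : ℕ) :
    ∫ x : ℝ, Real.exp (-x ^ 2) * x ^ (k + 2)
      = (k + 1) / 2 * ∫ x : ℝ, Real.exp (-x ^ 2) * x ^ k := by
  have hu : ∀ x : ℝ, HasDerivAt (fun x : ℝ => x ^ (k + 1)) ((k + 1) * x ^ k) x := fun x => by
    simpa using hasDerivAt_pow (k + 1) x
  have hv : ∀ x : ℝ, HasDerivAt (fun x : ℝ => -Real.exp (-x ^ 2) / 2)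
      (Real.exp (-x ^ 2) * x) x := fun x => by
    have h := (((hasDerivAt_pow 2 x).neg).exp.neg).div_const 2
    refine h.congr_deriv ?_
    simp
    ring
  have h := integral_mul_deriv_eq_deriv_mul_of_integrable (u := fun x : ℝ => x ^ (k + 1))
    (v := fun x : ℝ => -Real.exp (-x ^ 2) / 2) (fun x _ => hu x) (fun x _ => hv x)
    ((integrable_gauss_pow (k + 2)).congr (Filter.Eventually.of_forall fun x => by
      simp only [Pi.mul_apply]; ring))
    (((integrable_gauss_pow k).const_mul (-(k + 1) / 2)).congr
      (Filter.Eventually.of_forall fun x => by simp only [Pi.mul_apply]; ring))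
    (((integrable_gauss_pow (k + 1)).const_mul (-1 / 2)).congr
      (Filter.Eventually.of_forall fun x => by simp only [Pi.mul_apply]; ring))
  calc ∫ x : ℝ, Real.exp (-x ^ 2) * x ^ (k + 2)
      = ∫ x : ℝ, x ^ (k + 1) * (Real.exp (-x ^ 2) * x) := by
        congr 1; ext x; ring
    _ = -∫ x : ℝ, (k + 1) * x ^ k * (-Real.exp (-x ^ 2) / 2) := h
    _ = (k + 1) / 2 * ∫ x : ℝ, Real.exp (-x ^ 2) * x ^ k := by
        rw [← integral_neg, ← integral_const_mul]
        congr 1; ext x; ring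

lemma integral_gauss_pow (k : ℕ) :
    ∫ x : ℝ, Real.exp (-x ^ 2) * x ^ k = √Real.pi * (H k / 2 ^ k) := by
  induction k using Nat.twoStepInduction with
  | zero => simpa [H] using integral_gaussian 1
  | one =>
    have h := integral_neg_eq_self (fun x : ℝ => Real.exp (-x ^ 2) * x ^ 1) volume
    simp only [neg_sq, pow_one, mul_neg, integral_neg] at h
    simp only [H, pow_one, Int.cast_zero, zero_div, mul_zero]
    linarith
  | more k ih _ =>
    rw [integral_gauss_pow_succ, ih, H]
    push_cast
    field_simp
    ring

/-! ### Monomials against the weight on `ℝ⁶` -/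

lemma weight_mul_monomial (m : Fin 6 →₀ ℕ) (c : ℝ) (x : Fin 6 → ℝ) :
    Real.exp (-(∑ t, x t ^ 2)) * MvPolynomial.eval x (MvPolynomial.monomial m c)
      = c * ∏ i, (Real.exp (-x i ^ 2) * x i ^ m i) := by
  rw [MvPolynomial.eval_monomial, Finsupp.prod_fintype _ _ (fun i => pow_zero _),
    Finset.prod_mul_distrib, ← Real.exp_sum, Finset.sum_neg_distrib]
  ring

lemma integrable_monomial (m : Fin 6 →₀ ℕ) (c : ℝ) :
    Integrable (fun x : Fin 6 → ℝ =>
      Real.exp (-(∑ t, x t ^ 2)) * MvPolynomial.eval x (MvPolynomial.monomial m c)) := by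
  simp only [weight_mul_monomial]
  exact (Integrable.fintype_prod (f := fun i (t : ℝ) => Real.exp (-t ^ 2) * t ^ m i)
    fun i => integrable_gauss_pow (m i)).const_mul c

lemma integral_monomial (m : Fin 6 →₀ ℕ) (c : ℝ) :
    ∫ x : Fin 6 → ℝ,
      Real.exp (-(∑ t, x t ^ 2)) * MvPolynomial.eval x (MvPolynomial.monomial m c)
      = c * (Real.pi ^ 3 * ∏ i, ((H (m i) : ℝ) / 2 ^ m i)) := by
  simp only [weight_mul_monomial]
  rw [integral_const_mul,
    integral_fintype_prod_volume_eq_prod (fun i (t : ℝ) => Real.exp (-t ^ 2) * t ^ m i)]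
  simp only [integral_gauss_pow]
  rw [Finset.prod_mul_distrib, Finset.prod_const, Finset.card_univ, Fintype.card_fin,
    show (√Real.pi) ^ 6 = ((√Real.pi) ^ 2) ^ 3 by ring, Real.sq_sqrt Real.pi_pos.le]

/-! ### The nodes in integer coordinates -/

/-- The 27 nodes of radius 2, with the first coordinate scaled by `2` and the others
by `2 / √3`. -/
def nodes : List (Fin 6 → ℤ) :=
  [![-2, 2, 0, 0, 0, 0],
   ![-2, -2, 0, 0, 0, 0],
   ![-2, 0, -1, 1, 1, 1],
   ![-2, 0, 1, -1, -1, -1],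
   ![-2, 0, 1, -1, 1, 1],
   ![-2, 0, -1, 1, -1, -1],
   ![-2, 0, 1, 1, -1, 1],
   ![-2, 0, -1, -1, 1, -1],
   ![-2, 0, 1, 1, 1, -1],
   ![-2, 0, -1, -1, -1, 1],
   ![1, -1, 1, 1, 1, 1],
   ![1, -1, -1, -1, -1, -1],
   ![1, -1, -1, -1, 1, 1],
   ![1, -1, -1, 1, -1, 1],
   ![1, -1, -1, 1, 1, -1],
   ![1, -1, 1, -1, -1, 1],
   ![1, -1, 1, -1, 1, -1],
   ![1, -1, 1, 1, -1, -1],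
   ![4, 0, 0, 0, 0, 0],
   ![1, 1, 2, 0, 0, 0],
   ![1, 1, -2, 0, 0, 0],
   ![1, 1, 0, 2, 0, 0],
   ![1, 1, 0, -2, 0, 0],
   ![1, 1, 0, 0, 2, 0],
   ![1, 1, 0, 0, -2, 0],
   ![1, 1, 0, 0, 0, 2],
   ![1, 1, 0, 0, 0, -2]]

/-- The scaling factors that turn the integer coordinates of `nodes` into the actual ones. -/
noncomputable def scale : Fin 6 → ℝ := ![1 / 2, √3 / 2, √3 / 2, √3 / 2, √3 / 2, √3 / 2]

/-- The node sum for the monomial with exponents `m`, in integer coordinates and in units of the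
common weight `W₁`; the origin has weight `W₀ = 9 W₁`. -/
def nodeSum (m : Fin 6 → ℕ) : ℤ :=
  9 * ∏ i, (0 : ℤ) ^ m i + (nodes.map fun y => ∏ i, y i ^ m i).sum

/-- For odd `m₁ + ⋯ + m₅` the right-hand side vanishes, so the rounding in the exponent of `3`
is harmless. -/
lemma integer_identity_aux :
    ∀ m₀ < 5, ∀ m₁ < 5 - m₀, ∀ m₂ < 5 - m₀ - m₁, ∀ m₃ < 5 - m₀ - m₁ - m₂,
    ∀ m₄ < 5 - m₀ - m₁ - m₂ - m₃, ∀ m₅ < 5 - m₀ - m₁ - m₂ - m₃ - m₄,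
      3 ^ ((m₁ + m₂ + m₃ + m₄ + m₅) / 2) *
        (9 * (0 ^ m₀ * 0 ^ m₁ * 0 ^ m₂ * 0 ^ m₃ * 0 ^ m₄ * 0 ^ m₅) +
          (nodes.map fun y => y 0 ^ m₀ * y 1 ^ m₁ * y 2 ^ m₂ * y 3 ^ m₃ * y 4 ^ m₄ * y 5 ^ m₅).sum)
      = 36 * (H m₀ * H m₁ * H m₂ * H m₃ * H m₄ * H m₅) := by
  decide +kernel

lemma integer_identity (m : Fin 6 → ℕ) (hm : ∑ i, m i ≤ 4) :
    3 ^ ((m 1 + m 2 + m 3 + m 4 + m 5) / 2) * nodeSum m = 36 * ∏ i, H (m i) := by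
  simp only [nodeSum, Fin.prod_univ_six]
  rw [Fin.sum_univ_six] at hm
  exact integer_identity_aux (m 0) (by omega) (m 1) (by omega) (m 2) (by omega) (m 3) (by omega)
    (m 4) (by omega) (m 5) (by omega)

lemma prod_scale_pow (m : Fin 6 → ℕ) :
    ∏ i, scale i ^ m i = √3 ^ (m 1 + m 2 + m 3 + m 4 + m 5) / ∏ i, 2 ^ m i := by
  simp only [Fin.prod_univ_six, scale, pow_add]
  simp [div_pow]
  field_simp

/-- Exactness for the monomial with exponents `m`, after cancelling the weight `W₁ = π³ / 36` and
the powers of `2`. -/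
lemma sqrt_three_identity (m : Fin 6 → ℕ) (hm : ∑ i, m i ≤ 4) :
    √3 ^ (m 1 + m 2 + m 3 + m 4 + m 5) * (nodeSum m : ℝ) = 36 * ∏ i, (H (m i) : ℝ) := by
  have h := integer_identity m hm
  generalize hk : m 1 + m 2 + m 3 + m 4 + m 5 = k at h ⊢
  rcases Nat.even_or_odd' k with ⟨j, rfl | rfl⟩
  · rw [Nat.mul_div_cancel_left _ two_pos] at h
    rw [pow_mul, Real.sq_sqrt (by norm_num)]
    exact_mod_cast h
  · -- One of the exponents is odd, so its moment vanishes.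
    have hH : ∏ i, H (m i) = 0 := by
      obtain ⟨i, r, hi⟩ : ∃ i, ∃ r, m i = 2 * r + 1 := by
        by_contra! hcon
        have e1 := hcon 1 (m 1 / 2)
        have e2 := hcon 2 (m 2 / 2)
        have e3 := hcon 3 (m 3 / 2)
        have e4 := hcon 4 (m 4 / 2)
        have e5 := hcon 5 (m 5 / 2)
        omega
      exact Finset.prod_eq_zero (Finset.mem_univ i) (by rw [hi, H_odd])
    have hS : nodeSum m = 0 := by
      rw [hH, mul_zero] at h
      exact (mul_eq_zero.mp h).resolve_left (by positivity)
    have hH' : ∏ i, (H (m i) : ℝ) = 0 := by exact_mod_cast hH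
    rw [hS, hH']
    simp

/-! ### The cubature rule -/

/-- The cubature sum in units of the common weight `W₁`. -/
noncomputable def rule (q : MvPolynomial (Fin 6) ℝ) : ℝ :=
  9 * MvPolynomial.eval (fun i => scale i * ((0 : ℤ) : ℝ)) q +
    (nodes.map fun y => MvPolynomial.eval (fun i => scale i * (y i : ℝ)) q).sum

lemma rule_sum {ι : Type*} (s : Finset ι) (p : ι → MvPolynomial (Fin 6) ℝ) :
    rule (∑ j ∈ s, p j) = ∑ j ∈ s, rule (p j) := by
  simp only [rule, map_sum, Finset.sum_add_distrib, Finset.mul_sum]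
  congr 1
  induction nodes with
  | nil => simp
  | cons y l ih => simp [ih, Finset.sum_add_distrib]

lemma rule_monomial (m : Fin 6 →₀ ℕ) (c : ℝ) :
    rule (MvPolynomial.monomial m c) = c * ((∏ i, scale i ^ m i) * (nodeSum m : ℝ)) := by
  have hev : ∀ y : Fin 6 → ℤ,
      MvPolynomial.eval (fun i => scale i * (y i : ℝ)) (MvPolynomial.monomial m c)
        = c * (∏ i, scale i ^ m i) * ((∏ i, y i ^ m i : ℤ) : ℝ) := fun y => by
    rw [MvPolynomial.eval_monomial, Finsupp.prod_fintype _ _ (fun i => pow_zero _)]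
    simp only [mul_pow, Finset.prod_mul_distrib]
    push_cast
    ring
  simp only [rule, nodeSum, hev, List.sum_map_mul_left]
  push_cast [List.map_map]
  simp only [Function.comp_def]
  push_cast
  ring

lemma rule_monomial_eq_integral (m : Fin 6 →₀ ℕ) (hm : ∑ i, m i ≤ 4) (c : ℝ) :
    Real.pi ^ 3 / 36 * rule (MvPolynomial.monomial m c) = ∫ x : Fin 6 → ℝ,
      Real.exp (-(∑ t, x t ^ 2)) * MvPolynomial.eval x (MvPolynomial.monomial m c) := by
  rw [rule_monomial, integral_monomial, prod_scale_pow, div_mul_eq_mul_div (√3 ^ _),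
    sqrt_three_identity m hm, Finset.prod_div_distrib]
  ring

theorem rule_eq_integral (q : MvPolynomial (Fin 6) ℝ) (hq : q.totalDegree ≤ 4) :
    Real.pi ^ 3 / 36 * rule q
      = ∫ x : Fin 6 → ℝ, Real.exp (-(∑ t, x t ^ 2)) * MvPolynomial.eval x q := by
  have hdeg : ∀ m ∈ q.support, ∑ i, m i ≤ 4 := fun m hm => by
    have h := (MvPolynomial.le_totalDegree hm).trans hq
    rwa [Finsupp.sum_fintype _ _ (fun _ => rfl)] at h
  rw [q.as_sum]
  simp only [rule_sum, map_sum, Finset.mul_sum]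
  rw [integral_finsetSum _ fun m _ => integrable_monomial m _]
  exact Finset.sum_congr rfl fun m hm => rule_monomial_eq_integral m (hdeg m hm) _

lemma scale_mul_vec (y₀ y₁ y₂ y₃ y₄ y₅ : ℤ) :
    (fun i => scale i * ((![y₀, y₁, y₂, y₃, y₄, y₅] i : ℤ) : ℝ))
      = ![1 / 2 * (y₀ : ℝ), √3 / 2 * y₁, √3 / 2 * y₂, √3 / 2 * y₃, √3 / 2 * y₄, √3 / 2 * y₅] := by
  ext i
  fin_cases i <;> rfl

end Cubature28

/-- 28 point rule of degree 4 for `E_6^{r²}`. -/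
theorem stmt_13 (a b c e f W0 W1 : ℝ)
    (ha : a = 1 / 2)
    (hb : b = Real.sqrt (3 / 4))
    (hc : c = 1)
    (he : e = Real.sqrt 3)
    (hf : f = 2)
    (hW0 : W0 = Real.pi ^ 3 / 4)
    (hW1 : W1 = Real.pi ^ 3 / 36)
    :
    ∀ q : MvPolynomial (Fin 6) ℝ, q.totalDegree ≤ 4 →
      W0 * (MvPolynomial.eval ![0, 0, 0, 0, 0, 0] q)
        + W1 * (MvPolynomial.eval ![-c, e, 0, 0, 0, 0] q
          + MvPolynomial.eval ![-c, -e, 0, 0, 0, 0] q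
          + MvPolynomial.eval ![-c, 0, -b, b, b, b] q
          + MvPolynomial.eval ![-c, 0, b, -b, -b, -b] q
          + MvPolynomial.eval ![-c, 0, b, -b, b, b] q
          + MvPolynomial.eval ![-c, 0, -b, b, -b, -b] q
          + MvPolynomial.eval ![-c, 0, b, b, -b, b] q
          + MvPolynomial.eval ![-c, 0, -b, -b, b, -b] q
          + MvPolynomial.eval ![-c, 0, b, b, b, -b] q
          + MvPolynomial.eval ![-c, 0, -b, -b, -b, b] q
          + MvPolynomial.eval ![a, -b, b, b, b, b] q
          + MvPolynomial.eval ![a, -b, -b, -b, -b, -b] q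
          + MvPolynomial.eval ![a, -b, -b, -b, b, b] q
          + MvPolynomial.eval ![a, -b, -b, b, -b, b] q
          + MvPolynomial.eval ![a, -b, -b, b, b, -b] q
          + MvPolynomial.eval ![a, -b, b, -b, -b, b] q
          + MvPolynomial.eval ![a, -b, b, -b, b, -b] q
          + MvPolynomial.eval ![a, -b, b, b, -b, -b] q
          + MvPolynomial.eval ![f, 0, 0, 0, 0, 0] q
          + MvPolynomial.eval ![a, b, e, 0, 0, 0] q
          + MvPolynomial.eval ![a, b, -e, 0, 0, 0] q
          + MvPolynomial.eval ![a, b, 0, e, 0, 0] q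
          + MvPolynomial.eval ![a, b, 0, -e, 0, 0] q
          + MvPolynomial.eval ![a, b, 0, 0, e, 0] q
          + MvPolynomial.eval ![a, b, 0, 0, -e, 0] q
          + MvPolynomial.eval ![a, b, 0, 0, 0, e] q
          + MvPolynomial.eval ![a, b, 0, 0, 0, -e] q)
        = ∫ x : Fin 6 → ℝ, Real.exp (-(∑ t, x t ^ 2)) * MvPolynomial.eval x q := by
  intro q hq
  have hb' : b = √3 / 2 := by
    rw [hb, Real.sqrt_div (by norm_num), show (4 : ℝ) = 2 ^ 2 by norm_num,
      Real.sqrt_sq (by norm_num)]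
  have h0 : (fun i => Cubature28.scale i * ((0 : ℤ) : ℝ)) = ![0, 0, 0, 0, 0, 0] := by
    ext i
    fin_cases i <;> simp
  -- Normal forms of the scaled integer coordinates.
  have c1 : (1 / 2 : ℝ) * ((-2 : ℤ) : ℝ) = -c := by rw [hc]; norm_num
  have c2 : (1 / 2 : ℝ) * ((1 : ℤ) : ℝ) = a := by rw [ha]; norm_num
  have c3 : (1 / 2 : ℝ) * ((4 : ℤ) : ℝ) = f := by rw [hf]; norm_num
  have d0 : √3 / 2 * ((0 : ℤ) : ℝ) = 0 := by simp
  have d1 : √3 / 2 * ((1 : ℤ) : ℝ) = b := by rw [hb']; simp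
  have d2 : √3 / 2 * ((-1 : ℤ) : ℝ) = -b := by rw [hb']; simp
  have d3 : √3 / 2 * ((2 : ℤ) : ℝ) = e := by rw [he]; push_cast; ring
  have d4 : √3 / 2 * ((-2 : ℤ) : ℝ) = -e := by rw [he]; push_cast; ring
  rw [← Cubature28.rule_eq_integral q hq, Cubature28.rule, h0, Cubature28.nodes]
  simp only [List.map_cons, List.map_nil, List.sum_cons, List.sum_nil, Cubature28.scale_mul_vec,
    c1, c2, c3, d0, d1, d2, d3, d4]
  rw [hW0, hW1]
  ring
end
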